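/- Fix k ∈ {1,…,p−1}. Suppose that almost surely U^{-(k−1)} (U^{-(k−1)})ᵀ B V^{-(k−1)} (V^{-(k−1)})ᵀ = 0_{N×p} (the null hypothesis H_{0,k}). Then the conditional singular value statistic S_{k,0} = (∫_{d_k}^{d_{k−1}} e^{−z²/(2σ²)} z^{N−p} ∏_{j≤p, j≠k} |z² − d_j²| dz) / (∫_{d_{k+1}}^{d_{k−1}} e^{−z²/(2σ²)} z^{N−p} ∏_{j≤p, j≠k} |z² − d_j²| dz) is uniformly distributed on (0,1). -/

import Mathlib

open MeasureTheory ProbabilityTheory Matrix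

/-! The null hypothesis forces `B = 0`: it makes the last diagonal entry of `Uᵀ B V` vanish almost
surely. Having a singular value decomposition with this property is a closed condition on `Y` and
the Gaussian law has full support, so every matrix has one, and well-chosen test matrices isolate
each entry of `B`.

For `B = 0` the law of the ordered singular values is obtained without any change of variables.
Gaussian integration by parts along the vector fields `Y ↦ Y (Yᵀ Y) ^ m` yields loop
(Schwinger–Dyson) equations for the power sums `tr ((Yᵀ Y) ^ j)`. The density proportional to
`∏ᵢ xᵢ ^ (N - p) * ∏_{i < j} (xᵢ² - xⱼ²)` with respect to the Gaussian measure on `x₁ > ⋯ > x_p > 0`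
gives the same equations, which determine all mixed moments of the power sums by recursion on the
degree, and these moments determine the law.

In terms of this density the statistic is the conditional survival function of `d_k` given the
remaining singular values, evaluated at `d_k`, so the probability integral transform applies. -/

section GaussianReal

variable {v : NNReal}

lemma integrable_pow_gaussianReal (v : NNReal) (n : ℕ) :
    Integrable (fun x : ℝ => x ^ n) (gaussianReal 0 v) := by
  simpa using integrable_pow_of_mem_interior_integrableExpSet (X := id) (μ := gaussianReal 0 v)
    (by simp [integrableExpSet_id_gaussianReal]) n

lemma integrable_polynomial_gaussianReal (v : NNReal) (q : Polynomial ℝ) :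
    Integrable (fun x : ℝ => q.eval x) (gaussianReal 0 v) := by
  simp_rw [Polynomial.eval_eq_sum_range]
  exact integrable_finsetSum _ fun n _ => (integrable_pow_gaussianReal v n).const_mul _

lemma integrable_polynomial_mul_gaussianPDFReal (hv : v ≠ 0) (q : Polynomial ℝ) :
    Integrable (fun x => q.eval x * gaussianPDFReal 0 v x) := by
  have h := integrable_polynomial_gaussianReal v q
  rw [gaussianReal_of_var_ne_zero _ hv, integrable_withDensity_iff (measurable_gaussianPDF _ _)
    (by simp [gaussianPDF])] at h
  simpa using h

lemma hasDerivAt_gaussianPDFReal (μ : ℝ) (v : NNReal) (x : ℝ) :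
    HasDerivAt (gaussianPDFReal μ v) (-((x - μ) / v) * gaussianPDFReal μ v x) x := by
  rw [gaussianPDFReal_def]
  have h := ((((hasDerivAt_id x).sub_const μ).pow 2).neg.div_const (2 * (v : ℝ))).exp.const_mul
    (√(2 * Real.pi * v))⁻¹
  convert! h using 1
  simp only [id, Nat.cast_ofNat, Pi.neg_apply, Pi.pow_apply]
  ring

lemma hasDerivAt_polynomial_mul_gaussianPDFReal (v : NNReal) (q : Polynomial ℝ) (x : ℝ) :
    HasDerivAt (fun x => q.eval x * gaussianPDFReal 0 v x)
      ((q.derivative - Polynomial.C (v : ℝ)⁻¹ * (Polynomial.X * q)).eval x *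
        gaussianPDFReal 0 v x) x := by
  convert! (q.hasDerivAt x).mul (hasDerivAt_gaussianPDFReal 0 v x) using 1
  simp only [Polynomial.eval_sub, Polynomial.eval_mul, Polynomial.eval_C, Polynomial.eval_X]
  ring

lemma tendsto_polynomial_mul_gaussianPDFReal_atTop (hv : v ≠ 0) (q : Polynomial ℝ) :
    Filter.Tendsto (fun x => q.eval x * gaussianPDFReal 0 v x) Filter.atTop (nhds 0) :=
  tendsto_zero_of_hasDerivAt_of_integrableOn_Ioi (a := 0)
    (fun x _ => hasDerivAt_polynomial_mul_gaussianPDFReal v q x)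
    (integrable_polynomial_mul_gaussianPDFReal hv _).integrableOn
    (integrable_polynomial_mul_gaussianPDFReal hv q).integrableOn

lemma tendsto_polynomial_mul_gaussianPDFReal_atBot (hv : v ≠ 0) (q : Polynomial ℝ) :
    Filter.Tendsto (fun x => q.eval x * gaussianPDFReal 0 v x) Filter.atBot (nhds 0) :=
  tendsto_zero_of_hasDerivAt_of_integrableOn_Iic (a := 0)
    (fun x _ => hasDerivAt_polynomial_mul_gaussianPDFReal v q x)
    (integrable_polynomial_mul_gaussianPDFReal hv _).integrableOn
    (integrable_polynomial_mul_gaussianPDFReal hv q).integrableOn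

lemma hasDerivAt_indicator_of_notMem_frontier {f : ℝ → ℝ} {f' x : ℝ} {s : Set ℝ}
    (hf : HasDerivAt f f' x) (hx : x ∉ frontier s) :
    HasDerivAt (s.indicator f) (s.indicator (fun _ => f') x) x := by
  rw [frontier, Set.mem_sdiff, not_and_or, not_not] at hx
  rcases hx with hx | hx
  · have hs : sᶜ ∈ nhds x := by rwa [← mem_interior_iff_mem_nhds, interior_compl]
    rw [Set.indicator_of_notMem (mem_of_mem_nhds hs)]
    refine (hasDerivAt_const x 0).congr_of_eventuallyEq ?_
    filter_upwards [hs] with y hy using Set.indicator_of_notMem hy f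
  · have hs : s ∈ nhds x := mem_interior_iff_mem_nhds.1 hx
    rw [Set.indicator_of_mem (mem_of_mem_nhds hs)]
    refine hf.congr_of_eventuallyEq ?_
    filter_upwards [hs] with y hy using Set.indicator_of_mem hy f

lemma tendsto_indicator_nhds_zero {f : ℝ → ℝ} {l : Filter ℝ} (s : Set ℝ)
    (hf : Filter.Tendsto f l (nhds 0)) : Filter.Tendsto (s.indicator f) l (nhds 0) :=
  squeeze_zero_norm (norm_indicator_le_norm_self f) (by simpa using hf.norm)

lemma integral_eq_zero_of_hasDerivAt_off_countable {g g' : ℝ → ℝ} {t : Set ℝ} (ht : t.Countable)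
    (hg : Continuous g) (hderiv : ∀ x ∉ t, HasDerivAt g (g' x) x) (hint : Integrable g')
    (hbot : Filter.Tendsto g Filter.atBot (nhds 0))
    (htop : Filter.Tendsto g Filter.atTop (nhds 0)) :
    ∫ x, g' x = 0 := by
  have hlim := intervalIntegral_tendsto_integral hint Filter.tendsto_neg_atTop_atBot
    Filter.tendsto_id
  have hftc (a : ℝ) : ∫ x in -a..id a, g' x = g a - g (-a) :=
    MeasureTheory.integral_eq_of_hasDerivAt_off_countable g g' ht hg.continuousOn
      (fun x hx => hderiv x hx.2) hint.intervalIntegrable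
  simp only [hftc] at hlim
  refine tendsto_nhds_unique hlim ?_
  simpa using htop.sub (hbot.comp Filter.tendsto_neg_atTop_atBot)

/- Vanishing of `q` on the frontier makes `s.indicator q` continuous, hence no boundary terms in
the integration by parts, whatever the shape of `s`. -/
lemma setIntegral_gaussianReal_stein (hv : v ≠ 0) {s : Set ℝ} (hs : MeasurableSet s)
    {q : Polynomial ℝ} (hq : ∀ x ∈ frontier s, q.eval x = 0) :
    ∫ x in s, (Polynomial.C (v : ℝ) * q.derivative - Polynomial.X * q).eval x
      ∂gaussianReal 0 v = 0 := by
  rcases eq_or_ne q 0 with rfl | hq0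
  · simp
  have hv' : (v : ℝ) ≠ 0 := by exact_mod_cast hv
  set r := q.derivative - Polynomial.C (v : ℝ)⁻¹ * (Polynomial.X * q)
  have hr : Polynomial.C (v : ℝ) * q.derivative - Polynomial.X * q = Polynomial.C (v : ℝ) * r := by
    simp only [r, mul_sub, ← mul_assoc, ← Polynomial.C_mul, mul_inv_cancel₀ hv', map_one, one_mul]
  have hzero : ∫ x, s.indicator (fun x => r.eval x * gaussianPDFReal 0 v x) x = 0 := by
    refine integral_eq_zero_of_hasDerivAt_off_countable (q.finite_setOfPred_isRoot hq0).countable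
      (continuous_indicator (fun x hx => ?_) ?_) (fun x hx => ?_)
      ((integrable_polynomial_mul_gaussianPDFReal hv r).indicator hs)
      (tendsto_indicator_nhds_zero s (tendsto_polynomial_mul_gaussianPDFReal_atBot hv q))
      (tendsto_indicator_nhds_zero s (tendsto_polynomial_mul_gaussianPDFReal_atTop hv q))
    · simp [hq x hx]
    · exact Continuous.continuousOn <| continuous_iff_continuousAt.2 fun x =>
        (hasDerivAt_polynomial_mul_gaussianPDFReal v q x).continuousAt
    · exact hasDerivAt_indicator_of_notMem_frontier
        (hasDerivAt_polynomial_mul_gaussianPDFReal v q x) fun hxs => hx (hq x hxs)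
  rw [← integral_indicator hs, integral_gaussianReal_eq_integral_smul hv]
  refine Eq.trans ?_ ((integral_const_mul (v : ℝ) _).trans (by rw [hzero, mul_zero]))
  congr 1 with x
  by_cases hx : x ∈ s
  · simp only [hr, Set.indicator_of_mem hx, Polynomial.eval_mul, Polynomial.eval_C, smul_eq_mul]
    ring
  · simp [Set.indicator_of_notMem hx]

end GaussianReal

section Update

variable {ι : Type*} [Fintype ι] [DecidableEq ι] {α : ι → Type*} [∀ i, MeasurableSpace (α i)]
  (μ : ∀ i, Measure (α i)) [∀ i, IsProbabilityMeasure (μ i)]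

lemma measurePreserving_update (i : ι) :
    MeasurePreserving (fun y : (∀ j, α j) × α i => Function.update y.1 i y.2)
      ((Measure.pi μ).prod (μ i)) (Measure.pi μ) := by
  have hmeas : Measurable fun y : (∀ j, α j) × α i => Function.update y.1 i y.2 :=
    measurable_update'
  refine ⟨hmeas, (Measure.pi_eq fun s hs => ?_).symm⟩
  have hpre : (fun y : (∀ j, α j) × α i => Function.update y.1 i y.2) ⁻¹' Set.univ.pi s =
      Set.univ.pi (Function.update s i Set.univ) ×ˢ s i := by
    ext ⟨x, z⟩
    simp only [Set.mem_preimage, Set.mem_univ_pi, Set.mem_prod]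
    refine ⟨fun h => ⟨fun j => ?_, by simpa using h i⟩, fun h j => ?_⟩
    · rcases eq_or_ne j i with rfl | hj
      · simp
      · simpa [hj] using h j
    · rcases eq_or_ne j i with rfl | hj
      · simpa using h.2
      · simpa [hj] using h.1 j
  rw [Measure.map_apply hmeas (MeasurableSet.univ_pi hs), hpre, Measure.prod_prod, Measure.pi_pi,
    ← Finset.prod_erase_mul _ _ (Finset.mem_univ i),
    ← Finset.prod_erase_mul _ _ (Finset.mem_univ i), Function.update_self, measure_univ, mul_one]
  congr 1
  refine Finset.prod_congr rfl fun j hj => ?_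
  rw [Function.update_of_ne (Finset.ne_of_mem_erase hj)]

lemma integral_pi_eq_zero_of_integral_update_eq_zero {f : (∀ j, α j) → ℝ}
    (hf : Integrable f (Measure.pi μ)) (i : ι)
    (h : ∀ x, ∫ z, f (Function.update x i z) ∂μ i = 0) : ∫ x, f x ∂Measure.pi μ = 0 := by
  have hmp := measurePreserving_update μ i
  have hint := hmp.integrable_comp_of_integrable hf
  calc ∫ x, f x ∂Measure.pi μ
      = ∫ y, f (Function.update y.1 i y.2) ∂(Measure.pi μ).prod (μ i) := by
        rw [← integral_map hmp.aemeasurable (by rw [hmp.map_eq]; exact hf.1), hmp.map_eq]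
    _ = ∫ x, ∫ z, f (Function.update x i z) ∂μ i ∂Measure.pi μ := integral_prod _ hint
    _ = 0 := by simp only [h, integral_zero]

lemma lintegral_pi_eq_lintegral_lintegral_update {f : (∀ j, α j) → ENNReal} (hf : Measurable f)
    (i : ι) : ∫⁻ x, f x ∂Measure.pi μ =
      ∫⁻ x, ∫⁻ z, f (Function.update x i z) ∂μ i ∂Measure.pi μ := by
  have hmp := measurePreserving_update μ i
  rw [← hmp.lintegral_comp hf]
  exact lintegral_prod _ (hf.comp hmp.measurable).aemeasurable

end Update

section GaussianPi

variable {ι : Type*}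

/-- The univariate polynomial `z ↦ F (Function.update x i z)`: the restriction of `F` to the line
through `x` in the `i`-th coordinate direction. -/
noncomputable def restrictLine [DecidableEq ι] (x : ι → ℝ) (i : ι) :
    MvPolynomial ι ℝ →ₐ[ℝ] Polynomial ℝ :=
  MvPolynomial.aeval (Function.update (fun j => Polynomial.C (x j)) i Polynomial.X)

lemma eval_restrictLine [DecidableEq ι] (x : ι → ℝ) (i : ι) (F : MvPolynomial ι ℝ) (z : ℝ) :
    (restrictLine x i F).eval z = MvPolynomial.eval (Function.update x i z) F := by
  have h : (Polynomial.aeval z).comp (restrictLine x i) =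
      MvPolynomial.aeval (Function.update x i z) := by
    ext j
    rcases eq_or_ne j i with rfl | hj
    · simp [restrictLine]
    · simp [restrictLine, hj]
  exact DFunLike.congr_fun h F

lemma derivative_restrictLine [DecidableEq ι] (x : ι → ℝ) (i : ι) (F : MvPolynomial ι ℝ) :
    (restrictLine x i F).derivative = restrictLine x i (MvPolynomial.pderiv i F) := by
  induction F using MvPolynomial.induction_on with
  | C a => simp [restrictLine]
  | add f g hf hg => simp [hf, hg]
  | mul_X f j hf =>
    have hX : (restrictLine x i (MvPolynomial.X j)).derivative =
        restrictLine x i (MvPolynomial.pderiv i (MvPolynomial.X j)) := by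
      rcases eq_or_ne j i with rfl | hj
      · simp [restrictLine]
      · simp [restrictLine, hj, MvPolynomial.pderiv_X_of_ne hj]
    simp only [map_mul, map_add, Polynomial.derivative_mul, Derivation.leibniz, smul_eq_mul, hf, hX]
    ring

lemma measurable_mvPolynomial_eval [Finite ι] (F : MvPolynomial ι ℝ) :
    Measurable fun x : ι → ℝ => MvPolynomial.eval x F :=
  (MvPolynomial.continuous_eval F).measurable

variable [Fintype ι] {v : NNReal}

lemma integrable_mvPolynomial_pi_gaussianReal (v : NNReal) (F : MvPolynomial ι ℝ) :
    Integrable (fun x : ι → ℝ => MvPolynomial.eval x F)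
      (Measure.pi fun _ : ι => gaussianReal 0 v) := by
  simp only [MvPolynomial.eval_eq']
  exact integrable_finsetSum _ fun s _ => Integrable.const_mul
    (Integrable.fintype_prod (f := fun i (y : ℝ) => y ^ s i)
      fun i => integrable_pow_gaussianReal v (s i)) _

lemma setIntegral_pi_gaussianReal_stein [DecidableEq ι] (hv : v ≠ 0) {C : Set (ι → ℝ)}
    (hC : MeasurableSet C) {i : ι} {F : MvPolynomial ι ℝ}
    (hF : ∀ x, ∀ z ∈ frontier (Function.update x i ⁻¹' C),
      MvPolynomial.eval (Function.update x i z) F = 0) :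
    ∫ x in C, MvPolynomial.eval x
      (MvPolynomial.C (v : ℝ) * MvPolynomial.pderiv i F - MvPolynomial.X i * F)
      ∂Measure.pi (fun _ => gaussianReal 0 v) = 0 := by
  rw [← integral_indicator hC]
  refine integral_pi_eq_zero_of_integral_update_eq_zero _
    ((integrable_mvPolynomial_pi_gaussianReal v _).indicator hC) i fun x => ?_
  have hslice : MeasurableSet (Function.update x i ⁻¹' C) := measurable_update x hC
  refine Eq.trans ?_ (setIntegral_gaussianReal_stein hv hslice (q := restrictLine x i F)
    fun z hz => by rw [eval_restrictLine, hF x z hz])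
  rw [← integral_indicator hslice]
  congr 1 with z
  rw [← Set.indicator_comp_right]
  congr 1 with z
  simp [derivative_restrictLine, eval_restrictLine]

lemma exists_integrable_exp_sum_sq_pi_gaussianReal (v : NNReal) : ∃ ε : ℝ, 0 < ε ∧
    Integrable (fun x : ι → ℝ => Real.exp (ε * ∑ i, x i ^ 2))
      (Measure.pi fun _ : ι => gaussianReal 0 v) := by
  obtain ⟨ε, hε, h⟩ := IsGaussian.exists_integrable_exp_sq (gaussianReal 0 v)
  refine ⟨ε, hε, ?_⟩
  simpa [← Real.exp_sum, ← Finset.mul_sum] using Integrable.fintype_prod (ι := ι)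
    (μ := fun _ => gaussianReal 0 v) (f := fun _ (y : ℝ) => Real.exp (ε * ‖y‖ ^ 2)) fun _ => h

end GaussianPi

section LoopEquations

open MvPolynomial

/-- The derivation of `ℝ[X₀, X₁, …]` sending `X j` to `2 j X (j + m)`.  When `X j` stands for the
power sum `∑ᵢ xᵢ ^ (2 * j)`, this is the action of the vector field `∑ᵢ xᵢ ^ (2 * m + 1) ∂ᵢ`. -/
noncomputable def powerSumDerivation (m : ℕ) :
    Derivation ℝ (MvPolynomial ℕ ℝ) (MvPolynomial ℕ ℝ) :=
  mkDerivation ℝ fun j => ((2 * j : ℕ) : MvPolynomial ℕ ℝ) * X (j + m)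

/-- The divergence of the vector field `Y ↦ Y (Yᵀ Y) ^ m` on matrices with `n` rows, written in
the traces `X j = tr ((Yᵀ Y) ^ j)`. -/
noncomputable def loopCoeff (n m : ℕ) : MvPolynomial ℕ ℝ :=
  ((n + m : ℕ) : MvPolynomial ℕ ℝ) * X m + ∑ l ∈ Finset.range m, X (l + 1) * X (m - 1 - l)

/-- The loop (Schwinger–Dyson) equations for a linear functional `Φ` of the power sums of the
squared singular values of an `n × p` Gaussian matrix with entries of variance `v`. -/
structure SatisfiesLoopEquations (n p : ℕ) (v : ℝ) (Φ : MvPolynomial ℕ ℝ →ₗ[ℝ] ℝ) : Prop where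
  map_X_zero_mul : ∀ f, Φ (X 0 * f) = p * Φ f
  map_X_succ_mul : ∀ m f,
    Φ (X (m + 1) * f) = v * Φ (powerSumDerivation m f + loopCoeff n m * f)

/-- The polynomials of weight at most `w`, where `X j` has weight `j`. -/
noncomputable def weightLE (w : ℕ) : Submodule ℝ (MvPolynomial ℕ ℝ) :=
  Submodule.span ℝ {f | ∃ L : List ℕ, L.sum ≤ w ∧ f = (L.map X).prod}

lemma prod_X_mem_weightLE (L : List ℕ) : (L.map X).prod ∈ weightLE L.sum :=
  Submodule.subset_span ⟨L, le_rfl, rfl⟩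

lemma weightLE_mono : Monotone weightLE := fun _ _ h =>
  Submodule.span_mono fun _ ⟨L, hL, hf⟩ => ⟨L, hL.trans h, hf⟩

lemma X_mul_mem_weightLE {w : ℕ} (j : ℕ) {f : MvPolynomial ℕ ℝ} (hf : f ∈ weightLE w) :
    X j * f ∈ weightLE (j + w) := by
  induction hf using Submodule.span_induction with
  | mem f hf =>
    obtain ⟨L, hL, rfl⟩ := hf
    exact Submodule.subset_span ⟨j :: L, by simpa using hL, by simp⟩
  | zero => simp
  | add f g _ _ hf hg => rw [mul_add]; exact add_mem hf hg
  | smul c f _ hf => rw [mul_smul_comm]; exact Submodule.smul_mem _ _ hf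

lemma natCast_mul_mem_weightLE {w : ℕ} (c : ℕ) {f : MvPolynomial ℕ ℝ} (hf : f ∈ weightLE w) :
    (c : MvPolynomial ℕ ℝ) * f ∈ weightLE w := by
  rw [← nsmul_eq_mul]
  exact nsmul_mem hf c

lemma loopCoeff_mul_mem_weightLE (n m : ℕ) {w : ℕ} {f : MvPolynomial ℕ ℝ} (hf : f ∈ weightLE w) :
    loopCoeff n m * f ∈ weightLE (m + w) := by
  rw [loopCoeff, add_mul, mul_assoc, Finset.sum_mul]
  refine add_mem (natCast_mul_mem_weightLE _ (X_mul_mem_weightLE m hf))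
    (Submodule.sum_mem _ fun l hl => ?_)
  rw [mul_assoc]
  have := Finset.mem_range.1 hl
  exact weightLE_mono (by omega) (X_mul_mem_weightLE (l + 1) (X_mul_mem_weightLE (m - 1 - l) hf))

lemma powerSumDerivation_prod_X_mem_weightLE (m : ℕ) (L : List ℕ) :
    powerSumDerivation m (L.map X).prod ∈ weightLE (m + L.sum) := by
  induction L with
  | nil => simp
  | cons j L ih =>
    simp only [List.map_cons, List.prod_cons, Derivation.leibniz, smul_eq_mul, List.sum_cons]
    refine add_mem (weightLE_mono (by omega) (X_mul_mem_weightLE j ih)) ?_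
    rw [powerSumDerivation, mkDerivation_X, mul_comm, mul_assoc]
    exact natCast_mul_mem_weightLE _
      (weightLE_mono (by omega) (X_mul_mem_weightLE (j + m) (prod_X_mem_weightLE L)))

lemma exists_mem_weightLE (f : MvPolynomial ℕ ℝ) : ∃ w, f ∈ weightLE w := by
  induction f using MvPolynomial.induction_on with
  | C a =>
    refine ⟨0, ?_⟩
    rw [← mul_one (C a), ← smul_eq_C_mul]
    exact Submodule.smul_mem _ _ (prod_X_mem_weightLE [])
  | add f g hf hg =>
    obtain ⟨a, ha⟩ := hf
    obtain ⟨b, hb⟩ := hg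
    exact ⟨max a b,
      add_mem (weightLE_mono (le_max_left _ _) ha) (weightLE_mono (le_max_right _ _) hb)⟩
  | mul_X f j hf =>
    obtain ⟨a, ha⟩ := hf
    exact ⟨j + a, mul_comm f (X j) ▸ X_mul_mem_weightLE j ha⟩

namespace SatisfiesLoopEquations

variable {n p : ℕ} {v : ℝ} {Φ Ψ : MvPolynomial ℕ ℝ →ₗ[ℝ] ℝ}

lemma smul (hΦ : SatisfiesLoopEquations n p v Φ) (c : ℝ) :
    SatisfiesLoopEquations n p v (c • Φ) where
  map_X_zero_mul f := by
    simp only [LinearMap.smul_apply, smul_eq_mul, hΦ.map_X_zero_mul]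
    ring
  map_X_succ_mul m f := by
    simp only [LinearMap.smul_apply, smul_eq_mul, hΦ.map_X_succ_mul]
    ring

lemma sub (hΦ : SatisfiesLoopEquations n p v Φ) (hΨ : SatisfiesLoopEquations n p v Ψ) :
    SatisfiesLoopEquations n p v (Φ - Ψ) where
  map_X_zero_mul f := by
    simp only [LinearMap.sub_apply, hΦ.map_X_zero_mul, hΨ.map_X_zero_mul]
    ring
  map_X_succ_mul m f := by
    simp only [LinearMap.sub_apply, hΦ.map_X_succ_mul, hΨ.map_X_succ_mul]
    ring

lemma weightLE_le_ker (hΦ : SatisfiesLoopEquations n p v Φ) (h1 : Φ 1 = 0) (w : ℕ) :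
    weightLE w ≤ LinearMap.ker Φ := by
  induction w using Nat.strong_induction_on with
  | _ w ih =>
    rw [weightLE, Submodule.span_le]
    rintro _ ⟨L, hL, rfl⟩
    rw [SetLike.mem_coe, LinearMap.mem_ker]
    induction L with
    | nil => simpa using h1
    | cons j L ihL =>
      simp only [List.map_cons, List.prod_cons, List.sum_cons] at hL ⊢
      cases j with
      | zero => rw [hΦ.map_X_zero_mul, ihL (by omega), mul_zero]
      | succ m =>
        have hmem : powerSumDerivation m (L.map X).prod + loopCoeff n m * (L.map X).prod ∈
            weightLE (m + L.sum) :=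
          add_mem (powerSumDerivation_prod_X_mem_weightLE m L)
            (loopCoeff_mul_mem_weightLE n m (prod_X_mem_weightLE L))
        rw [hΦ.map_X_succ_mul, LinearMap.mem_ker.1 (ih _ (by omega) hmem), mul_zero]

lemma eq_zero (hΦ : SatisfiesLoopEquations n p v Φ) (h1 : Φ 1 = 0) : Φ = 0 := by
  refine LinearMap.ext fun f => ?_
  obtain ⟨w, hw⟩ := exists_mem_weightLE f
  exact hΦ.weightLE_le_ker h1 w hw

lemma map_one_mul_comm (hΦ : SatisfiesLoopEquations n p v Φ) (hΨ : SatisfiesLoopEquations n p v Ψ)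
    (f : MvPolynomial ℕ ℝ) : Ψ 1 * Φ f = Φ 1 * Ψ f := by
  have h : Ψ 1 • Φ - Φ 1 • Ψ = 0 := ((hΦ.smul _).sub (hΨ.smul _)).eq_zero (by simp [mul_comm])
  simpa [sub_eq_zero] using DFunLike.congr_fun h f

end SatisfiesLoopEquations

lemma aeval_powerSumDerivation {R : Type*} [CommRing R] [Algebra ℝ R] {D : Derivation ℝ R R}
    {T : ℕ → R} {m : ℕ} (h : ∀ j, D (T j) = (2 * j : ℕ) * T (j + m)) (f : MvPolynomial ℕ ℝ) :
    aeval T (powerSumDerivation m f) = D (aeval T f) := by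
  induction f using MvPolynomial.induction_on with
  | C a => simp [powerSumDerivation]
  | add f g hf hg => simp [hf, hg]
  | mul_X f j hf =>
    simp only [map_mul, Derivation.leibniz, ← hf, aeval_X, smul_eq_mul, map_add]
    rw [h, powerSumDerivation, mkDerivation_X]
    simp

end LoopEquations

section VectorField

open MvPolynomial

variable {σ : Type*} [Fintype σ]

lemma mkDerivation_eq_sum_pderiv (g : σ → MvPolynomial σ ℝ) (F : MvPolynomial σ ℝ) :
    mkDerivation ℝ g F = ∑ i, g i * pderiv i F := by
  classical
  induction F using MvPolynomial.induction_on with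
  | C a => simp
  | add F G hF hG => simp only [map_add, mul_add, Finset.sum_add_distrib, hF, hG]
  | mul_X F j hF =>
    simp only [Derivation.leibniz, smul_eq_mul, hF, mkDerivation_X, mul_add,
      Finset.sum_add_distrib, pderiv_X, Finset.mul_sum]
    congr 1
    · rw [Finset.sum_eq_single j (fun i _ hi => by simp [hi.symm]) (by simp)]
      simp [mul_comm]
    · exact Finset.sum_congr rfl fun i _ => by ring

lemma sum_pderiv_mul (g : σ → MvPolynomial σ ℝ) (F : MvPolynomial σ ℝ) :
    ∑ i, pderiv i (g i * F) = (∑ i, pderiv i (g i)) * F + mkDerivation ℝ g F := by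
  simp only [Derivation.leibniz, smul_eq_mul, mkDerivation_eq_sum_pderiv, Finset.sum_mul,
    ← Finset.sum_add_distrib]
  exact Finset.sum_congr rfl fun i _ => by ring

/-- The functional `f ↦ ∫_C f(T₀, T₁, …) W dγ`, where `γ` is the centred Gaussian measure with
independent coordinates of variance `v`. -/
noncomputable def gaussianFunctional (v : NNReal) (C : Set (σ → ℝ)) (T : ℕ → MvPolynomial σ ℝ)
    (W : MvPolynomial σ ℝ) : MvPolynomial ℕ ℝ →ₗ[ℝ] ℝ where
  toFun f := ∫ x in C, eval x (aeval T f * W) ∂Measure.pi fun _ => gaussianReal 0 v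
  map_add' f g := by
    simp only [map_add, add_mul]
    exact integral_add (integrable_mvPolynomial_pi_gaussianReal v _).integrableOn
      (integrable_mvPolynomial_pi_gaussianReal v _).integrableOn
  map_smul' c f := by
    simp only [map_smul, smul_mul_assoc, smul_eval, integral_const_mul, RingHom.id_apply,
      smul_eq_mul]

lemma setIntegral_sum_X_mul_eq {v : NNReal} (hv : v ≠ 0) {C : Set (σ → ℝ)} (hC : MeasurableSet C)
    [DecidableEq σ] {g : σ → MvPolynomial σ ℝ}
    (hg : ∀ i x, ∀ z ∈ frontier (Function.update x i ⁻¹' C),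
      eval (Function.update x i z) (g i) = 0) :
    ∫ x in C, eval x (∑ i, X i * g i) ∂Measure.pi (fun _ => gaussianReal 0 v) =
      v * ∫ x in C, eval x (∑ i, pderiv i (g i)) ∂Measure.pi fun _ => gaussianReal 0 v := by
  have hint (F : MvPolynomial σ ℝ) := (integrable_mvPolynomial_pi_gaussianReal v F).integrableOn
    (s := C)
  rw [← integral_const_mul, eq_comm, ← sub_eq_zero, ← integral_sub ((hint _).const_mul _) (hint _)]
  calc _ = ∫ x in C, ∑ i, eval x (MvPolynomial.C (v : ℝ) * pderiv i (g i) - X i * g i)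
          ∂Measure.pi fun _ => gaussianReal 0 v := by
        simp only [map_sum, map_sub, map_mul, eval_C, Finset.sum_sub_distrib, Finset.mul_sum]
    _ = 0 := by
        rw [integral_finsetSum _ fun i _ => hint _]
        exact Finset.sum_eq_zero fun i _ => setIntegral_pi_gaussianReal_stein hv hC (hg i)

/- Integrate the divergence of the vector fields `f(T) W g m` by parts. -/
lemma satisfiesLoopEquations_gaussianFunctional [DecidableEq σ] {n p : ℕ} {v : NNReal} (hv : v ≠ 0)
    {C : Set (σ → ℝ)} (hC : MeasurableSet C) {T : ℕ → MvPolynomial σ ℝ} {W : MvPolynomial σ ℝ}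
    {g : ℕ → σ → MvPolynomial σ ℝ} (hT0 : T 0 = p)
    (hgT : ∀ m j, mkDerivation ℝ (g m) (T j) = (2 * j : ℕ) * T (j + m))
    (hdiv : ∀ m, ∑ i, pderiv i (g m i * W) = aeval T (loopCoeff n m) * W)
    (hdot : ∀ m, ∑ i, X i * g m i = T (m + 1))
    (hbdry : ∀ m i x, ∀ z ∈ frontier (Function.update x i ⁻¹' C),
      eval (Function.update x i z) (g m i * W) = 0) :
    SatisfiesLoopEquations n p v (gaussianFunctional v C T W) where
  map_X_zero_mul f := by
    simp only [gaussianFunctional, LinearMap.coe_mk, AddHom.coe_mk, ← integral_const_mul]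
    simp [hT0, mul_assoc]
  map_X_succ_mul m f := by
    have hfield : ∑ i, X i * (g m i * (aeval T f * W)) = aeval T (X (m + 1) * f) * W := by
      rw [map_mul, aeval_X, ← hdot m, mul_assoc, Finset.sum_mul]
      exact Finset.sum_congr rfl fun i _ => by ring
    have hdivergence : ∑ i, pderiv i (g m i * (aeval T f * W)) =
        aeval T (powerSumDerivation m f + loopCoeff n m * f) * W := by
      have hW := hdiv m
      rw [sum_pderiv_mul] at hW ⊢
      rw [Derivation.leibniz, map_add, map_mul, aeval_powerSumDerivation (hgT m)]
      simp only [smul_eq_mul]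
      linear_combination aeval T f * hW
    simp only [gaussianFunctional, LinearMap.coe_mk, AddHom.coe_mk]
    rw [← hfield, ← hdivergence]
    refine setIntegral_sum_X_mul_eq hv hC fun i x z hz => ?_
    rw [mul_left_comm, map_mul, hbdry m i x z hz, mul_zero]

end VectorField

section MatrixDerivation

variable {S R l m n : Type*} [CommSemiring S] [CommRing R] [Algebra S R] (D : Derivation S R R)

lemma map_derivation_mul [Fintype m] (A : Matrix l m R) (B : Matrix m n R) :
    (A * B).map D = A.map D * B + A * B.map D := by
  ext i j
  simp only [Matrix.map_apply, Matrix.mul_apply, Matrix.add_apply, map_sum, Derivation.leibniz,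
    smul_eq_mul, ← Finset.sum_add_distrib]
  exact Finset.sum_congr rfl fun _ _ => by ring

lemma map_derivation_pow [Fintype n] [DecidableEq n] (A : Matrix n n R) (k : ℕ) :
    (A ^ k).map D = ∑ i ∈ Finset.range k, A ^ i * A.map D * A ^ (k - 1 - i) := by
  induction k with
  | zero =>
    ext i j
    by_cases h : i = j <;> simp [h]
  | succ k ih =>
    rw [pow_succ, map_derivation_mul, ih, Finset.sum_range_succ, Finset.sum_mul]
    congr 1
    · refine Finset.sum_congr rfl fun i hi => ?_
      rw [mul_assoc, ← pow_succ, show k - 1 - i + 1 = k + 1 - 1 - i by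
        have := Finset.mem_range.1 hi
        omega]
    · simp

lemma mul_single_mul_apply [Fintype m] [Fintype n] [DecidableEq m] [DecidableEq n] {o : Type*}
    (A : Matrix l m R) (B : Matrix n o R) (a : l) (i : m) (j : n) (b : o) :
    (A * Matrix.single i j (1 : R) * B) a b = A a i * B j b := by
  rw [Matrix.mul_apply, Finset.sum_eq_single j]
  · simp
  · intro c _ hc
    rw [Matrix.mul_single_apply_of_ne _ _ _ _ _ hc, zero_mul]
  · simp

end MatrixDerivation

section GenericMatrix

open MvPolynomial

lemma map_pderiv_mvPolynomialX {α β : Type*} [DecidableEq α] [DecidableEq β] (a : α) (b : β) :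
    (mvPolynomialX α β ℝ).map (pderiv (a, b)) = Matrix.single a b 1 := by
  ext i j
  simp [mvPolynomialX_apply, pderiv_X, Matrix.single_apply, Pi.single_apply, eq_comm]

variable (α β : Type*) [Fintype α]

/-- The Gram matrix `Yᵀ Y` of the generic matrix `Y`, with polynomial entries. -/
noncomputable def genericGram : Matrix β β (MvPolynomial (α × β) ℝ) :=
  (mvPolynomialX α β ℝ)ᵀ * mvPolynomialX α β ℝ

variable {α β} in
lemma map_pderiv_genericGram [DecidableEq α] [DecidableEq β] (a : α) (b : β) :
    (genericGram α β).map (pderiv (a, b)) =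
      Matrix.single b a (1 : MvPolynomial (α × β) ℝ) * mvPolynomialX α β ℝ +
        (mvPolynomialX α β ℝ)ᵀ * Matrix.single a b (1 : MvPolynomial (α × β) ℝ) := by
  rw [genericGram, map_derivation_mul, Matrix.transpose_map, map_pderiv_mvPolynomialX,
    Matrix.transpose_single]

variable [Fintype β] [DecidableEq β]

/-- The vector field `Y ↦ Y (Yᵀ Y) ^ m` on matrices, with polynomial entries. -/
noncomputable def gramField (m : ℕ) : Matrix α β (MvPolynomial (α × β) ℝ) :=
  mvPolynomialX α β ℝ * genericGram α β ^ m

lemma transpose_genericGram_pow (m : ℕ) : (genericGram α β ^ m)ᵀ = genericGram α β ^ m := by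
  rw [Matrix.transpose_pow, genericGram, Matrix.transpose_mul, Matrix.transpose_transpose]

lemma sum_gramField_mul_gramField (i j : ℕ) :
    ∑ x : α × β, gramField α β i x.1 x.2 * gramField α β j x.1 x.2 =
      (genericGram α β ^ (i + j + 1)).trace := by
  have hgram : (gramField α β i)ᵀ * gramField α β j = genericGram α β ^ (i + j + 1) := by
    rw [gramField, gramField, Matrix.transpose_mul, transpose_genericGram_pow, Matrix.mul_assoc,
      ← Matrix.mul_assoc (mvPolynomialX α β ℝ)ᵀ, ← genericGram, ← pow_succ', ← pow_add, add_assoc]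
  rw [Fintype.sum_prod_type, Finset.sum_comm, ← hgram]
  simp [Matrix.trace, Matrix.mul_apply]

lemma sum_X_mul_gramField (m : ℕ) :
    ∑ x : α × β, X x * gramField α β m x.1 x.2 = (genericGram α β ^ (m + 1)).trace := by
  rw [← Nat.zero_add m, ← sum_gramField_mul_gramField]
  simp [gramField]

variable {α β} (a : α) (b : β)

lemma trace_genericGram_pow_mul_map_pderiv (m : ℕ) :
    (genericGram α β ^ m * (genericGram α β).map (pderiv (a, b))).trace =
      2 * gramField α β m a b := by
  classical
  have hleft : (genericGram α β ^ m *
      (Matrix.single b a (1 : MvPolynomial (α × β) ℝ) * mvPolynomialX α β ℝ)).trace =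
        gramField α β m a b := by
    rw [Matrix.trace_mul_comm, Matrix.mul_assoc, Matrix.trace_mul_comm, Matrix.trace_mul_single]
    simp [gramField]
  have hright : (genericGram α β ^ m *
      ((mvPolynomialX α β ℝ)ᵀ * Matrix.single a b (1 : MvPolynomial (α × β) ℝ))).trace =
        gramField α β m a b := by
    rw [← Matrix.mul_assoc, Matrix.trace_mul_single, ← transpose_genericGram_pow,
      ← Matrix.transpose_mul]
    simp [gramField]
  rw [map_pderiv_genericGram, mul_add, Matrix.trace_add, hleft, hright, two_mul]

lemma pderiv_trace_genericGram_pow_succ (j : ℕ) :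
    pderiv (a, b) (genericGram α β ^ (j + 1)).trace =
      (2 * (j + 1) : ℕ) * gramField α β j a b := by
  have hterm : ∀ i ∈ Finset.range (j + 1), (genericGram α β ^ i *
      (genericGram α β).map (pderiv (a, b)) * genericGram α β ^ (j + 1 - 1 - i)).trace =
        2 * gramField α β j a b := fun i hi => by
    rw [Matrix.trace_mul_comm, ← mul_assoc, ← pow_add, trace_genericGram_pow_mul_map_pderiv,
      show j + 1 - 1 - i + i = j by have := Finset.mem_range.1 hi; omega]
  calc pderiv (a, b) (genericGram α β ^ (j + 1)).trace
      = ((genericGram α β ^ (j + 1)).map (pderiv (a, b))).trace := by simp [Matrix.trace, map_sum]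
    _ = (2 * (j + 1) : ℕ) * gramField α β j a b := by
      rw [map_derivation_pow, Matrix.trace_sum, Finset.sum_congr rfl hterm, Finset.sum_const,
        Finset.card_range, nsmul_eq_mul]
      push_cast
      ring

lemma pderiv_gramField (m : ℕ) :
    pderiv (a, b) (gramField α β m a b) =
      (genericGram α β ^ m) b b + ∑ i ∈ Finset.range m,
        (gramField α β i a b * gramField α β (m - 1 - i) a b +
          (gramField α β i * (mvPolynomialX α β ℝ)ᵀ) a a *
            (genericGram α β ^ (m - 1 - i)) b b) := by
  classical
  change (gramField α β m).map (pderiv (a, b)) a b = _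
  rw [gramField, map_derivation_mul, map_derivation_pow, map_pderiv_mvPolynomialX,
    Matrix.add_apply, Matrix.mul_sum, Matrix.sum_apply]
  congr 1
  · simp
  · refine Finset.sum_congr rfl fun i _ => ?_
    rw [← mul_single_mul_apply, ← mul_single_mul_apply, ← Matrix.add_apply,
      map_pderiv_genericGram, gramField, gramField]
    simp only [Matrix.mul_add, Matrix.add_mul, Matrix.mul_assoc]

lemma sum_pderiv_gramField (m : ℕ) :
    ∑ x : α × β, pderiv x (gramField α β m x.1 x.2) =
      aeval (fun j => (genericGram α β ^ j).trace) (loopCoeff (Fintype.card α) m) := by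
  have hdiag : ∑ x : α × β, (genericGram α β ^ m) x.2 x.2 =
      Fintype.card α * (genericGram α β ^ m).trace := by
    simp [Fintype.sum_prod_type, Matrix.trace]
  have hterm : ∀ i ∈ Finset.range m,
      ∑ x : α × β, (gramField α β i x.1 x.2 * gramField α β (m - 1 - i) x.1 x.2 +
        (gramField α β i * (mvPolynomialX α β ℝ)ᵀ) x.1 x.1 *
          (genericGram α β ^ (m - 1 - i)) x.2 x.2) =
      (genericGram α β ^ m).trace +
        (genericGram α β ^ (i + 1)).trace * (genericGram α β ^ (m - 1 - i)).trace := fun i hi => by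
    have htrace : (gramField α β i * (mvPolynomialX α β ℝ)ᵀ).trace =
        (genericGram α β ^ (i + 1)).trace := by
      rw [Matrix.trace_mul_comm, gramField, ← Matrix.mul_assoc, ← genericGram, ← pow_succ']
    rw [Finset.sum_add_distrib, sum_gramField_mul_gramField, ← htrace,
      show i + (m - 1 - i) + 1 = m by have := Finset.mem_range.1 hi; omega]
    simp only [Fintype.sum_prod_type, Matrix.trace, Matrix.diag_apply, Finset.sum_mul_sum]
  calc ∑ x : α × β, pderiv x (gramField α β m x.1 x.2)
      = Fintype.card α * (genericGram α β ^ m).trace + ∑ i ∈ Finset.range m,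
          ((genericGram α β ^ m).trace +
            (genericGram α β ^ (i + 1)).trace * (genericGram α β ^ (m - 1 - i)).trace) := by
        rw [← hdiag, ← Finset.sum_congr rfl hterm, Finset.sum_comm, ← Finset.sum_add_distrib]
        exact Finset.sum_congr rfl fun x _ => pderiv_gramField x.1 x.2 m
    _ = aeval (fun j => (genericGram α β ^ j).trace) (loopCoeff (Fintype.card α) m) := by
        rw [loopCoeff, Finset.sum_add_distrib]
        simp
        ring

lemma mkDerivation_trace_genericGram_pow (m j : ℕ) :
    mkDerivation ℝ (fun x : α × β => gramField α β m x.1 x.2) (genericGram α β ^ j).trace =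
      (2 * j : ℕ) * (genericGram α β ^ (j + m)).trace := by
  rw [mkDerivation_eq_sum_pderiv]
  cases j with
  | zero => simp [Matrix.trace_one]
  | succ j =>
    rw [add_right_comm, add_comm j m, ← sum_gramField_mul_gramField, Finset.mul_sum]
    refine Finset.sum_congr rfl fun x _ => ?_
    rw [pderiv_trace_genericGram_pow_succ]
    ring

variable (α β) in
lemma satisfiesLoopEquations_genericGram {v : NNReal} (hv : v ≠ 0) :
    SatisfiesLoopEquations (Fintype.card α) (Fintype.card β) v
      (gaussianFunctional v Set.univ (fun j => (genericGram α β ^ j).trace) 1) := by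
  classical
  exact satisfiesLoopEquations_gaussianFunctional hv MeasurableSet.univ
    (g := fun m x => gramField α β m x.1 x.2) (by simp [Matrix.trace_one])
    mkDerivation_trace_genericGram_pow (fun m => by simpa using sum_pderiv_gramField m)
    (sum_X_mul_gramField α β) (by simp)

end GenericMatrix

lemma derivation_prod_eq_of_eq_mul {S R ι : Type*} [CommSemiring S] [CommRing R] [Algebra S R]
    (D : Derivation S R R) {s : Finset ι} {f c : ι → R} (h : ∀ i ∈ s, D (f i) = c i * f i) :
    D (∏ i ∈ s, f i) = (∑ i ∈ s, c i) * ∏ i ∈ s, f i := by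
  classical
  induction s using Finset.induction_on with
  | empty => simp
  | insert a s ha ih =>
    rw [Finset.prod_insert ha, Finset.sum_insert ha, Derivation.leibniz,
      ih fun i hi => h i (Finset.mem_insert_of_mem hi), h a (Finset.mem_insert_self _ _)]
    simp only [smul_eq_mul]
    ring

section SingularWeight

open MvPolynomial

/-- The power sum `∑ᵢ xᵢ ^ (2 * j)`, that is `tr ((Yᵀ Y) ^ j)` in terms of the singular values `x`
of `Y`. -/
noncomputable def evenPowerSum (σ : Type*) [Fintype σ] (j : ℕ) : MvPolynomial σ ℝ :=
  ∑ i, X i ^ (2 * j)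

/-- The density `∏ᵢ xᵢ ^ q * ∏_{i < j} (xᵢ² - xⱼ²)` of the ordered singular values of a centred
Gaussian `(p + q) × p` matrix with respect to the Gaussian measure, up to a constant. -/
noncomputable def singularWeight (p q : ℕ) : MvPolynomial (Fin p) ℝ :=
  (∏ i, X i ^ q) * ∏ i, ∏ j ∈ Finset.Ioi i, (X i ^ 2 - X j ^ 2)

/-- The vector field `x ↦ (xᵢ ^ (2 * m + 1))ᵢ`, which is `Y ↦ Y (Yᵀ Y) ^ m` in terms of the
singular values `x` of `Y`. -/
noncomputable def oddPowerField (σ : Type*) (m : ℕ) (i : σ) : MvPolynomial σ ℝ :=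
  X i ^ (2 * m + 1)

lemma mkDerivation_oddPowerField_X_pow {σ : Type*} (m q : ℕ) (i : σ) :
    mkDerivation ℝ (oddPowerField σ m) (X i ^ q) =
      ((q : MvPolynomial σ ℝ) * X i ^ (2 * m)) * X i ^ q := by
  rw [Derivation.leibniz_pow, mkDerivation_X, oddPowerField]
  cases q with
  | zero => simp
  | succ q =>
    simp
    ring

lemma mkDerivation_oddPowerField_evenPowerSum {σ : Type*} [Fintype σ] (m j : ℕ) :
    mkDerivation ℝ (oddPowerField σ m) (evenPowerSum σ j) =
      (2 * j : ℕ) * evenPowerSum σ (j + m) := by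
  rw [evenPowerSum, map_sum, evenPowerSum, Finset.mul_sum]
  refine Finset.sum_congr rfl fun i _ => ?_
  rw [mkDerivation_oddPowerField_X_pow]
  ring

/-- The complete homogeneous polynomial of degree `m` in `xᵢ²` and `xⱼ²`. -/
noncomputable def geomKernel {σ : Type*} (m : ℕ) (i j : σ) : MvPolynomial σ ℝ :=
  ∑ l ∈ Finset.range (m + 1), (X i ^ 2) ^ l * (X j ^ 2) ^ (m - l)

lemma geomKernel_comm {σ : Type*} (m : ℕ) (i j : σ) : geomKernel m i j = geomKernel m j i := by
  rw [geomKernel, geomKernel, ← Finset.sum_range_reflect]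
  refine Finset.sum_congr rfl fun l hl => ?_
  have := Finset.mem_range.1 hl
  rw [show m + 1 - 1 - l = m - l by omega, show m - (m - l) = l by omega, mul_comm]

lemma geomKernel_self {σ : Type*} (m : ℕ) (i : σ) :
    geomKernel m i i = (m + 1 : MvPolynomial σ ℝ) * X i ^ (2 * m) := by
  rw [geomKernel, Finset.sum_congr rfl (g := fun _ => X i ^ (2 * m))]
  · simp
  · intro l hl
    rw [← pow_add, ← pow_mul, Nat.add_sub_cancel' (Finset.mem_range_succ_iff.1 hl)]

lemma mkDerivation_oddPowerField_singularWeight (p q m : ℕ) :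
    mkDerivation ℝ (oddPowerField (Fin p) m) (singularWeight p q) =
      ((q : MvPolynomial (Fin p) ℝ) * evenPowerSum (Fin p) m +
        ∑ i : Fin p, ∑ j ∈ Finset.Ioi i, 2 * geomKernel m i j) * singularWeight p q := by
  have hpow : mkDerivation ℝ (oddPowerField (Fin p) m) (∏ i, X i ^ q) =
      ((q : MvPolynomial (Fin p) ℝ) * evenPowerSum (Fin p) m) * ∏ i, X i ^ q := by
    rw [derivation_prod_eq_of_eq_mul _ fun i _ => mkDerivation_oddPowerField_X_pow m q i,
      evenPowerSum, Finset.mul_sum]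
  have hdiff (i j : Fin p) : mkDerivation ℝ (oddPowerField (Fin p) m) (X i ^ 2 - X j ^ 2) =
      2 * geomKernel m i j * (X i ^ 2 - X j ^ 2) := by
    have hgeom := geom_sum₂_mul (X i ^ 2 : MvPolynomial (Fin p) ℝ) (X j ^ 2) (m + 1)
    simp only [Nat.add_sub_cancel] at hgeom
    rw [map_sub, mkDerivation_oddPowerField_X_pow, mkDerivation_oddPowerField_X_pow, geomKernel,
      mul_assoc 2, hgeom]
    push_cast
    ring
  have hvandermonde := derivation_prod_eq_of_eq_mul (mkDerivation ℝ (oddPowerField (Fin p) m))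
    (s := Finset.univ) fun i _ => derivation_prod_eq_of_eq_mul _
      (s := Finset.Ioi i) fun j _ => hdiff i j
  rw [singularWeight, Derivation.leibniz, hpow, hvandermonde]
  simp only [smul_eq_mul]
  ring

lemma sum_geomKernel_Ioi (p m : ℕ) :
    ∑ i : Fin p, ∑ j ∈ Finset.Ioi i, 2 * geomKernel m i j +
        (m + 1 : MvPolynomial (Fin p) ℝ) * evenPowerSum (Fin p) m =
      ∑ l ∈ Finset.range (m + 1), evenPowerSum (Fin p) l * evenPowerSum (Fin p) (m - l) := by
  have hoff : ∑ i : Fin p, ∑ j ∈ Finset.Ioi i, 2 * geomKernel m i j =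
      ∑ i : Fin p, ∑ j ∈ {i}ᶜ, geomKernel m j i := by
    rw [← Finset.sum_sum_Ioi_add_eq_sum_sum_off_diag fun i j => geomKernel m i j]
    refine Finset.sum_congr rfl fun i _ => Finset.sum_congr rfl fun j _ => ?_
    rw [geomKernel_comm m j i, two_mul]
  calc _ = ∑ i : Fin p, ∑ j, geomKernel m j i := by
        rw [hoff, evenPowerSum, Finset.mul_sum, ← Finset.sum_add_distrib]
        refine Finset.sum_congr rfl fun i _ => ?_
        rw [← geomKernel_self, ← Finset.sum_compl_add_sum {i}, Finset.sum_singleton]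
    _ = _ := by
        simp only [geomKernel, evenPowerSum, Finset.sum_mul_sum, pow_mul]
        rw [Finset.sum_comm, Finset.sum_congr rfl fun _ _ => Finset.sum_comm, Finset.sum_comm]

lemma sum_pderiv_oddPowerField_mul_singularWeight (p q m : ℕ) :
    ∑ i, pderiv i (oddPowerField (Fin p) m i * singularWeight p q) =
      aeval (evenPowerSum (Fin p)) (loopCoeff (p + q) m) * singularWeight p q := by
  have hpderiv : ∑ i, pderiv i (oddPowerField (Fin p) m i) =
      (2 * m + 1 : MvPolynomial (Fin p) ℝ) * evenPowerSum (Fin p) m := by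
    simp [oddPowerField, Derivation.leibniz_pow, evenPowerSum, Finset.mul_sum]
  have hkernel := sum_geomKernel_Ioi p m
  have hzero : evenPowerSum (Fin p) 0 = p := by simp [evenPowerSum]
  rw [Finset.sum_range_succ', hzero] at hkernel
  have hloop : aeval (evenPowerSum (Fin p)) (loopCoeff (p + q) m) =
      (p + q + m : MvPolynomial (Fin p) ℝ) * evenPowerSum (Fin p) m +
        ∑ l ∈ Finset.range m,
          evenPowerSum (Fin p) (l + 1) * evenPowerSum (Fin p) (m - (l + 1)) := by
    simp [loopCoeff, Nat.sub_sub, add_comm 1]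
  rw [sum_pderiv_mul, hpderiv, mkDerivation_oddPowerField_singularWeight, hloop]
  linear_combination singularWeight p q * hkernel

end SingularWeight

section Chamber

open MvPolynomial

/-- The vectors with positive, strictly decreasing coordinates. -/
def strictChamber (p : ℕ) : Set (Fin p → ℝ) := {x | StrictAnti x ∧ ∀ i, 0 < x i}

variable {p : ℕ}

lemma isOpen_strictChamber : IsOpen (strictChamber p) := by
  have h : strictChamber p =
      (⋂ i, ⋂ j, ⋂ (_ : i < j), {x | x j < x i}) ∩ ⋂ i, {x : Fin p → ℝ | 0 < x i} := by
    ext x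
    simp [strictChamber, StrictAnti]
  rw [h]
  exact (isOpen_iInter_of_finite fun i => isOpen_iInter_of_finite fun j =>
    isOpen_iInter_of_finite fun _ => isOpen_lt (by fun_prop) (by fun_prop)).inter
      (isOpen_iInter_of_finite fun i => isOpen_lt (by fun_prop) (by fun_prop))

lemma antitone_of_mem_closure_strictChamber {x : Fin p → ℝ} (hx : x ∈ closure (strictChamber p)) :
    Antitone x := by
  have h : IsClosed {x : Fin p → ℝ | Antitone x} := isClosed_antitone
  exact h.closure_subset_iff.2 (fun y hy => hy.1.antitone) hx

lemma nonneg_of_mem_closure_strictChamber {x : Fin p → ℝ} (hx : x ∈ closure (strictChamber p))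
    (i : Fin p) : 0 ≤ x i :=
  (isClosed_le continuous_const (continuous_apply i)).closure_subset_iff.2
    (fun _ hy => (hy.2 i).le) hx

lemma eval_singularWeight_pos (q : ℕ) {x : Fin p → ℝ} (hx : x ∈ strictChamber p) :
    0 < eval x (singularWeight p q) := by
  simp only [singularWeight, map_mul, map_prod, map_pow, map_sub, eval_X]
  refine mul_pos (Finset.prod_pos fun i _ => pow_pos (hx.2 i) q)
    (Finset.prod_pos fun i _ => Finset.prod_pos fun j hj => ?_)
  exact sub_pos.2 (pow_lt_pow_left₀ (hx.1 (Finset.mem_Ioi.1 hj)) (hx.2 j).le two_ne_zero)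

lemma eval_singularWeight_eq_zero (q : ℕ) {x : Fin p → ℝ} (hx : ¬ Function.Injective x) :
    eval x (singularWeight p q) = 0 := by
  obtain ⟨a, b, hab, hne⟩ := Function.not_injective_iff.1 hx
  wlog hlt : a < b generalizing a b
  · exact this b a hab.symm hne.symm (hne.lt_or_gt.resolve_left hlt)
  simp only [singularWeight, map_mul, map_prod, map_pow, map_sub, eval_X]
  refine mul_eq_zero_of_right _ (Finset.prod_eq_zero (Finset.mem_univ a)
    (Finset.prod_eq_zero (Finset.mem_Ioi.2 hlt) ?_))
  rw [hab, sub_self]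

/- A boundary point of a slice of the chamber has two equal coordinates, where the weight vanishes,
or its moving coordinate is `0`, where the vector field vanishes. -/
lemma eval_oddPowerField_mul_singularWeight_eq_zero (q m : ℕ) (i : Fin p) (x : Fin p → ℝ) {z : ℝ}
    (hz : z ∈ frontier (Function.update x i ⁻¹' strictChamber p)) :
    eval (Function.update x i z) (oddPowerField (Fin p) m i * singularWeight p q) = 0 := by
  have hcont : Continuous (Function.update x i) := continuous_const.update i continuous_id
  rw [map_mul]
  by_cases hinj : Function.Injective (Function.update x i z)
  swap
  · rw [eval_singularWeight_eq_zero q hinj, mul_zero]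
  rw [(isOpen_strictChamber.preimage hcont).frontier_eq] at hz
  have hclosure : Function.update x i z ∈ closure (strictChamber p) :=
    hcont.closure_preimage_subset _ hz.1
  obtain ⟨z', hz'⟩ := closure_nonempty_iff.1 ⟨z, hz.1⟩
  have hzero : z = 0 := by
    by_contra hne
    refine hz.2 ⟨(antitone_of_mem_closure_strictChamber hclosure).strictAnti_of_injective hinj,
      fun a => ?_⟩
    rcases eq_or_ne a i with rfl | ha
    · have := nonneg_of_mem_closure_strictChamber hclosure a
      simp only [Function.update_self] at this ⊢
      exact this.lt_of_ne' hne
    · simpa [ha] using hz'.2 a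
  simp [oddPowerField, hzero]

lemma satisfiesLoopEquations_singularWeight {v : NNReal} (hv : v ≠ 0) (p q : ℕ) :
    SatisfiesLoopEquations (p + q) p v
      (gaussianFunctional v (strictChamber p) (evenPowerSum (Fin p)) (singularWeight p q)) :=
  satisfiesLoopEquations_gaussianFunctional hv isOpen_strictChamber.measurableSet
    (by simp [evenPowerSum]) mkDerivation_oddPowerField_evenPowerSum
    (sum_pderiv_oddPowerField_mul_singularWeight p q)
    (fun m => Finset.sum_congr rfl fun i _ => by rw [oddPowerField]; ring)
    fun m i x _ hz => eval_oddPowerField_mul_singularWeight_eq_zero q m i x hz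

lemma isOpenPosMeasure_gaussianReal (μ : ℝ) {v : NNReal} (hv : v ≠ 0) :
    (gaussianReal μ v).IsOpenPosMeasure :=
  (gaussianReal_absolutelyContinuous' μ hv).isOpenPosMeasure

lemma setIntegral_singularWeight_pos {v : NNReal} (hv : v ≠ 0) (p q : ℕ) :
    0 < ∫ x in strictChamber p, eval x (singularWeight p q)
      ∂Measure.pi fun _ => gaussianReal 0 v := by
  have hne : (strictChamber p).Nonempty :=
    ⟨fun i => p - i, fun i j hij => by simpa using hij, fun i => by simp⟩
  have := isOpenPosMeasure_gaussianReal 0 hv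
  rw [setIntegral_pos_iff_support_of_nonneg_ae
    (ae_restrict_of_forall_mem isOpen_strictChamber.measurableSet
      fun x hx => (eval_singularWeight_pos q hx).le)
    (integrable_mvPolynomial_pi_gaussianReal v _).integrableOn,
    Set.inter_eq_right.2 fun x hx =>
      Function.mem_support.2 (eval_singularWeight_pos q hx).ne']
  exact isOpen_strictChamber.measure_pos _ hne

end Chamber

section MomentDeterminacy

variable {Ω Ω' : Type*} {mΩ : MeasurableSpace Ω} {mΩ' : MeasurableSpace Ω'} {μ : Measure Ω}
  {ν : Measure Ω'} {X : Ω → ℝ} {Y : Ω' → ℝ}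

lemma complexMGF_eventuallyEq_of_integral_pow_eq (hμ : 0 ∈ interior (integrableExpSet X μ))
    (hν : 0 ∈ interior (integrableExpSet Y ν)) (h : ∀ n : ℕ, ∫ ω, X ω ^ n ∂μ = ∫ ω, Y ω ^ n ∂ν) :
    complexMGF X μ =ᶠ[nhds 0] complexMGF Y ν := by
  have hX := (analyticAt_complexMGF (z := 0) (by simpa using hμ)).hasFPowerSeriesAt
  have hY := (analyticAt_complexMGF (z := 0) (by simpa using hν)).hasFPowerSeriesAt
  have hderiv (n : ℕ) :
      iteratedDeriv n (complexMGF X μ) 0 = iteratedDeriv n (complexMGF Y ν) 0 := by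
    rw [iteratedDeriv_complexMGF (by simpa using hμ), iteratedDeriv_complexMGF (by simpa using hν)]
    simpa [← integral_complex_ofReal] using congrArg ((↑) : ℝ → ℂ) (h n)
  simp only [hderiv] at hX
  filter_upwards [HasFPowerSeriesAt.eventually_eq_zero (by simpa using hX.sub hY)] with z hz
  simpa [sub_eq_zero] using hz

lemma eqOn_complexMGF_of_integral_pow_eq (hμ : 0 ∈ interior (integrableExpSet X μ))
    (hν : 0 ∈ interior (integrableExpSet Y ν)) (h : ∀ n : ℕ, ∫ ω, X ω ^ n ∂μ = ∫ ω, Y ω ^ n ∂ν) :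
    Set.EqOn (complexMGF X μ) (complexMGF Y ν)
      {z | z.re ∈ interior (integrableExpSet X μ) ∩ interior (integrableExpSet Y ν)} :=
  AnalyticOnNhd.eqOn_of_preconnected_of_eventuallyEq
    (analyticOnNhd_complexMGF.mono fun _ hz => hz.1)
    (analyticOnNhd_complexMGF.mono fun _ hz => hz.2)
    ((convex_integrableExpSet.interior.inter convex_integrableExpSet.interior).linear_preimage
      Complex.reLm).isPreconnected
    (by simpa using And.intro hμ hν) (complexMGF_eventuallyEq_of_integral_pow_eq hμ hν h)

end MomentDeterminacy

section ExpNorm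

variable {E : Type*} [NormedAddCommGroup E] [NormedSpace ℝ E] [MeasurableSpace E] [BorelSpace E]
  {μ ν : Measure E} {ε δ : ℝ}

lemma zero_mem_interior_integrableExpSet_of_integrable_exp_norm (hε : 0 < ε)
    (h : Integrable (fun x => Real.exp (ε * ‖x‖)) μ) (L : StrongDual ℝ E) :
    0 ∈ interior (integrableExpSet L μ) := by
  rw [mem_interior_iff_mem_nhds]
  have hsmall : ∀ᶠ t : ℝ in nhds 0, |t| * ‖L‖ < ε :=
    (Continuous.tendsto (by fun_prop) 0).eventually_lt_const (by simpa using hε)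
  filter_upwards [hsmall] with t ht
  refine h.mono' (by fun_prop) (ae_of_all _ fun x => ?_)
  rw [Real.norm_eq_abs, Real.abs_exp, Real.exp_le_exp]
  calc t * L x ≤ |t| * |L x| := (le_abs_self _).trans (abs_mul _ _).le
    _ ≤ |t| * (‖L‖ * ‖x‖) := by gcongr; exact L.le_opNorm x
    _ ≤ ε * ‖x‖ := by rw [← mul_assoc]; gcongr

lemma measure_eq_of_integral_dual_pow_eq [CompleteSpace E] [SecondCountableTopology E]
    [IsFiniteMeasure μ] [IsFiniteMeasure ν] (hε : 0 < ε)
    (hμ : Integrable (fun x => Real.exp (ε * ‖x‖)) μ)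
    (hν : Integrable (fun x => Real.exp (ε * ‖x‖)) ν)
    (h : ∀ (L : StrongDual ℝ E) (n : ℕ), ∫ x, L x ^ n ∂μ = ∫ x, L x ^ n ∂ν) : μ = ν := by
  refine Measure.ext_of_charFunDual (funext fun L => ?_)
  have hLμ := zero_mem_interior_integrableExpSet_of_integrable_exp_norm hε hμ L
  have hLν := zero_mem_interior_integrableExpSet_of_integrable_exp_norm hε hν L
  rw [charFunDual_eq_charFun_map_one, charFunDual_eq_charFun_map_one,
    ← complexMGF_mul_I (by fun_prop), ← complexMGF_mul_I (by fun_prop)]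
  exact eqOn_complexMGF_of_integral_pow_eq hLμ hLν (h L) (by simpa using And.intro hLμ hLν)

end ExpNorm

section SymmetricPolynomial

open MvPolynomial

variable {σ R : Type*} [Fintype σ]

lemma isSymmetric_sum_rename [DecidableEq σ] [CommSemiring R] (F : MvPolynomial σ R) :
    (∑ π : Equiv.Perm σ, rename π F).IsSymmetric := fun e => by
  simpa [rename_rename] using
    Equiv.sum_comp (Equiv.mulLeft e) fun π : Equiv.Perm σ => rename π F

variable [Field R] [CharZero R]

lemma esymm_mem_range_aeval_psum (k : ℕ) :
    esymm σ R k ∈ (aeval (R := R) fun j => psum σ R j).range := by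
  induction k using Nat.strong_induction_on with
  | _ k ih =>
    rcases eq_or_ne k 0 with rfl | hk
    · simp
    · have hmem : (k : R) • esymm σ R k ∈ (aeval (R := R) fun j => psum σ R j).range := by
        rw [Nat.cast_smul_eq_nsmul, nsmul_eq_mul, mul_esymm_eq_sum]
        refine mul_mem (pow_mem (neg_mem (one_mem _)) _) (sum_mem fun a ha => ?_)
        exact mul_mem (mul_mem (pow_mem (neg_mem (one_mem _)) _) (ih _ (Finset.mem_filter.1 ha).2))
          ⟨X a.2, by simp⟩
      simpa [smul_smul, hk] using Subalgebra.smul_mem _ hmem (k : R)⁻¹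

lemma exists_aeval_psum_eq {Q : MvPolynomial σ R} (hQ : Q.IsSymmetric) :
    ∃ f : MvPolynomial ℕ R, aeval (fun j => psum σ R j) f = Q := by
  obtain ⟨g, hg⟩ := esymmAlgHom_surjective (σ := σ) R le_rfl ⟨Q, hQ⟩
  have hmem : Q ∈ Algebra.adjoin R (Set.range fun i : Fin (Fintype.card σ) =>
      esymm σ R (i + 1)) := by
    rw [Algebra.adjoin_range_eq_range_aeval]
    exact ⟨g, (esymmAlgHom_apply g).symm.trans (congrArg Subtype.val hg)⟩
  exact Algebra.adjoin_le (Set.range_subset_iff.2 fun i => esymm_mem_range_aeval_psum _) hmem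

end SymmetricPolynomial

section Symmetrization

variable {ι : Type*} [Fintype ι] [DecidableEq ι] {μ ν : Measure (ι → ℝ)} {ε : ℝ}

/-- The symmetrization, without normalization, of a measure on `ι → ℝ` under permutations of the
coordinates. -/
noncomputable def permSum (μ : Measure (ι → ℝ)) : Measure (ι → ℝ) :=
  ∑ π : Equiv.Perm ι, μ.map fun x => x ∘ π

instance [IsFiniteMeasure μ] : IsFiniteMeasure (permSum μ) := by
  unfold permSum; infer_instance

omit [Fintype ι] [DecidableEq ι] in
lemma measurable_comp_perm (π : Equiv.Perm ι) : Measurable fun x : ι → ℝ => x ∘ π :=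
  measurable_pi_lambda _ fun i => measurable_pi_apply (π i)

lemma permSum_apply {s : Set (ι → ℝ)} (hs : MeasurableSet s) :
    permSum μ s = ∑ π : Equiv.Perm ι, μ {x | x ∘ π ∈ s} := by
  simp only [permSum, Measure.finsetSum_apply]
  exact Finset.sum_congr rfl fun π _ => Measure.map_apply (measurable_comp_perm π) hs

lemma integrable_exp_norm_permSum (h : Integrable (fun x => Real.exp (ε * ‖x‖)) μ) :
    Integrable (fun x => Real.exp (ε * ‖x‖)) (permSum μ) := by
  refine integrable_finsetSum_measure.2 fun π _ => ?_
  rw [integrable_map_measure (by fun_prop) (measurable_comp_perm π).aemeasurable]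
  refine h.congr (ae_of_all _ fun x => ?_)
  simp only [Function.comp_def, ← π.surjective.pi_norm_comp x]

lemma integral_eval_permSum (F : MvPolynomial ι ℝ)
    (h : Integrable (fun x => MvPolynomial.eval x F) (permSum μ)) :
    ∫ x, MvPolynomial.eval x F ∂permSum μ =
      ∫ x, MvPolynomial.eval x (∑ π : Equiv.Perm ι, MvPolynomial.rename π F) ∂μ := by
  have hF := measurable_mvPolynomial_eval F
  have hmap := integrable_finsetSum_measure.1 h
  simp only [map_sum, MvPolynomial.eval_rename]
  rw [permSum, integral_finsetSum_measure hmap, integral_finsetSum]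
  · exact Finset.sum_congr rfl fun π _ =>
      integral_map (measurable_comp_perm π).aemeasurable hF.aestronglyMeasurable
  · exact fun π hπ => (integrable_map_measure hF.aestronglyMeasurable
      (measurable_comp_perm π).aemeasurable).1 (hmap π hπ)

lemma permSum_eq_of_integral_isSymmetric_eq [IsFiniteMeasure μ] [IsFiniteMeasure ν] (hε : 0 < ε)
    (hμ : Integrable (fun x => Real.exp (ε * ‖x‖)) μ)
    (hν : Integrable (fun x => Real.exp (ε * ‖x‖)) ν)
    (h : ∀ Q : MvPolynomial ι ℝ, Q.IsSymmetric →
      ∫ x, MvPolynomial.eval x Q ∂μ = ∫ x, MvPolynomial.eval x Q ∂ν) :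
    permSum μ = permSum ν := by
  have hμ' := integrable_exp_norm_permSum hμ
  have hν' := integrable_exp_norm_permSum hν
  refine measure_eq_of_integral_dual_pow_eq hε hμ' hν' fun L n => ?_
  let F : MvPolynomial ι ℝ :=
    (∑ i, MvPolynomial.C (L (Pi.single i 1)) * MvPolynomial.X i) ^ n
  have hF (x : ι → ℝ) : L x ^ n = MvPolynomial.eval x F := by
    conv_lhs => rw [pi_eq_sum_univ' x]
    simp [F, mul_comm]
  have hLμ := integrable_pow_of_mem_interior_integrableExpSet
    (zero_mem_interior_integrableExpSet_of_integrable_exp_norm hε hμ' L) n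
  have hLν := integrable_pow_of_mem_interior_integrableExpSet
    (zero_mem_interior_integrableExpSet_of_integrable_exp_norm hε hν' L) n
  simp only [hF] at hLμ hLν ⊢
  rw [integral_eval_permSum F hLμ, integral_eval_permSum F hLν, h _ (isSymmetric_sum_rename F)]

end Symmetrization

section Ordered

variable {ι : Type*} [Fintype ι] [LinearOrder ι] {μ ν : Measure (ι → ℝ)}

omit [Fintype ι] in
lemma eq_one_of_antitone_of_strictAnti_comp [Finite ι] {x : ι → ℝ} {π : Equiv.Perm ι}
    (hx : Antitone x) (hπ : StrictAnti (x ∘ π)) : π = 1 := by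
  have hmono : StrictMono π := fun i j hij => by
    by_contra hle
    exact (hx (not_lt.1 hle)).not_gt (hπ hij)
  exact Equiv.ext fun i => congrFun ((hmono.range_inj strictMono_id).1 (by simp)) i

lemma permSum_apply_of_subset_strictAnti (hμ : ∀ᵐ x ∂μ, Antitone x) {s : Set (ι → ℝ)}
    (hs : MeasurableSet s) (hsub : s ⊆ {x | StrictAnti x}) : permSum μ s = μ s := by
  rw [permSum_apply hs, Finset.sum_eq_single 1 _ (by simp)]
  · rfl
  · refine fun π _ hπ => measure_mono_null (t := {x | ¬ Antitone x}) (fun x hx hanti => hπ ?_) hμ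
    exact eq_one_of_antitone_of_strictAnti_comp hanti (hsub hx)

omit [LinearOrder ι] in
lemma measure_univ_eq_of_permSum_eq [DecidableEq ι] (h : permSum μ = permSum ν) :
    μ Set.univ = ν Set.univ := by
  have huniv := congrArg (fun m => m Set.univ) h
  simp only [permSum_apply MeasurableSet.univ, Set.mem_univ, Finset.sum_const,
    nsmul_eq_mul] at huniv
  exact (ENNReal.mul_right_inj (by simp) (by simp)).1 huniv

omit [Fintype ι] in
lemma measurableSet_setOf_strictAnti [Countable ι] : MeasurableSet {x : ι → ℝ | StrictAnti x} := by
  simp only [StrictAnti, Set.ofPred_forall]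
  exact .iInter fun i => .iInter fun j => .iInter fun _ =>
    measurableSet_lt (measurable_pi_apply j) (measurable_pi_apply i)

lemma measure_eq_of_permSum_eq [IsFiniteMeasure μ] (hμ : ∀ᵐ x ∂μ, Antitone x)
    (hν : ∀ᵐ x ∂ν, StrictAnti x) (h : permSum μ = permSum ν) : μ = ν := by
  have hT : MeasurableSet {x : ι → ℝ | StrictAnti x} := measurableSet_setOf_strictAnti
  have hsub {s : Set (ι → ℝ)} (hs : MeasurableSet s) :
      μ (s ∩ {x | StrictAnti x}) = ν (s ∩ {x | StrictAnti x}) := by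
    rw [← permSum_apply_of_subset_strictAnti hμ (hs.inter hT) Set.inter_subset_right,
      ← permSum_apply_of_subset_strictAnti (hν.mono fun x hx => hx.antitone) (hs.inter hT)
        Set.inter_subset_right, h]
  have hμ' : ∀ᵐ x ∂μ, StrictAnti x := by
    refine (ae_iff_measure_eq hT.nullMeasurableSet).2 ?_
    rw [measure_univ_eq_of_permSum_eq h, ← measure_inter_conull hν, ← hsub .univ, Set.univ_inter]
  ext s hs
  rw [← measure_inter_conull hμ', ← measure_inter_conull hν]
  exact hsub hs

end Ordered

section EvenPowerSum

variable {p : ℕ}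

lemma eval_aeval_evenPowerSum (f : MvPolynomial ℕ ℝ) (x : Fin p → ℝ) :
    MvPolynomial.eval x (MvPolynomial.aeval (evenPowerSum (Fin p)) f) =
      MvPolynomial.eval (x ^ 2)
        (MvPolynomial.aeval (fun j => MvPolynomial.psum (Fin p) ℝ j) f) := by
  rw [← MvPolynomial.coe_aeval_eq_eval, ← MvPolynomial.coe_aeval_eq_eval, RingHom.coe_coe,
    RingHom.coe_coe, MvPolynomial.comp_aeval_apply, MvPolynomial.comp_aeval_apply]
  simp [evenPowerSum, MvPolynomial.psum, pow_mul]

lemma integrable_exp_norm_map_sq {μ : Measure (Fin p → ℝ)} {ε : ℝ} (hε : 0 < ε)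
    (h : Integrable (fun x => Real.exp (ε * ∑ i, x i ^ 2)) μ) :
    Integrable (fun y => Real.exp (ε * ‖y‖)) (μ.map fun x => x ^ 2) := by
  rw [integrable_map_measure (by fun_prop) (by fun_prop)]
  refine h.mono' (Measurable.aestronglyMeasurable (by fun_prop)) (ae_of_all _ fun x => ?_)
  rw [Function.comp_apply, Real.norm_eq_abs, Real.abs_exp, Real.exp_le_exp]
  refine mul_le_mul_of_nonneg_left ((pi_norm_le_iff_of_nonneg (by positivity)).2 fun i => ?_) hε.le
  simpa using Finset.single_le_sum (f := fun i => x i ^ 2) (fun i _ => by positivity)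
    (Finset.mem_univ i)

lemma map_sqrt_map_sq {μ : Measure (Fin p → ℝ)} (hμ : ∀ᵐ x ∂μ, ∀ i, 0 ≤ x i) :
    (μ.map fun x => x ^ 2).map (fun y i => √(y i)) = μ := by
  rw [Measure.map_map (by fun_prop) (by fun_prop)]
  conv_rhs => rw [← Measure.map_id (μ := μ)]
  exact Measure.map_congr (hμ.mono fun x hx => funext fun i => Real.sqrt_sq (hx i))

/- In the coordinates `x i ^ 2` the hypothesis is about all symmetric polynomials, and the
exponential integrability of `∑ x i ^ 2` makes the moment problem determinate. -/
lemma measure_eq_of_integral_evenPowerSum_eq {μ ν : Measure (Fin p → ℝ)} [IsFiniteMeasure μ]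
    [IsFiniteMeasure ν] {ε : ℝ} (hε : 0 < ε)
    (hμ : Integrable (fun x => Real.exp (ε * ∑ i, x i ^ 2)) μ)
    (hν : Integrable (fun x => Real.exp (ε * ∑ i, x i ^ 2)) ν)
    (hμanti : ∀ᵐ x ∂μ, Antitone x ∧ 0 ≤ x) (hνstrict : ∀ᵐ x ∂ν, x ∈ strictChamber p)
    (h : ∀ f : MvPolynomial ℕ ℝ,
      ∫ x, MvPolynomial.eval x (MvPolynomial.aeval (evenPowerSum (Fin p)) f) ∂μ =
        ∫ x, MvPolynomial.eval x (MvPolynomial.aeval (evenPowerSum (Fin p)) f) ∂ν) :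
    μ = ν := by
  have hsq : Measurable fun x : Fin p → ℝ => x ^ 2 := by fun_prop
  have hperm : permSum (μ.map fun x => x ^ 2) = permSum (ν.map fun x => x ^ 2) := by
    refine permSum_eq_of_integral_isSymmetric_eq hε (integrable_exp_norm_map_sq hε hμ)
      (integrable_exp_norm_map_sq hε hν) fun Q hQ => ?_
    obtain ⟨f, rfl⟩ := exists_aeval_psum_eq hQ
    have heval := measurable_mvPolynomial_eval
      (MvPolynomial.aeval (fun j => MvPolynomial.psum (Fin p) ℝ j) f)
    rw [integral_map hsq.aemeasurable heval.aestronglyMeasurable,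
      integral_map hsq.aemeasurable heval.aestronglyMeasurable]
    simpa only [eval_aeval_evenPowerSum] using h f
  have heq : (μ.map fun x => x ^ 2) = ν.map fun x => x ^ 2 := by
    refine measure_eq_of_permSum_eq ?_ ?_ hperm
    · refine (ae_map_iff hsq.aemeasurable isClosed_antitone.measurableSet).2
        (hμanti.mono fun x hx i j hij => ?_)
      exact pow_le_pow_left₀ (hx.2 j) (hx.1 hij) 2
    · refine (ae_map_iff hsq.aemeasurable measurableSet_setOf_strictAnti).2
        (hνstrict.mono fun x hx i j hij => ?_)
      exact pow_lt_pow_left₀ (hx.1 hij) (hx.2 j).le two_ne_zero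
  rw [← map_sqrt_map_sq (hμanti.mono fun x hx => hx.2), heq,
    map_sqrt_map_sq (hνstrict.mono fun x hx i => (hx.2 i).le)]

end EvenPowerSum

section SingularValueDecomposition

variable {m n : Type*} [Fintype n] [DecidableEq n]

/-- `Y = U D Vᵀ` is a thin singular value decomposition, with the singular values `d` listed in
decreasing order. -/
structure IsSVD [Fintype m] [Preorder n] (Y U : Matrix m n ℝ) (d : n → ℝ) (V : Matrix n n ℝ) :
    Prop where
  eq_mul : Y = U * diagonal d * Vᵀ
  left_orthonormal : Uᵀ * U = 1
  right_orthonormal : Vᵀ * V = 1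
  antitone : Antitone d
  nonneg : 0 ≤ d

lemma eval_trace_genericGram_pow [Fintype m] (Y : m → n → ℝ) (j : ℕ) :
    MvPolynomial.eval (fun x => Y x.1 x.2) (genericGram m n ^ j).trace =
      (((of Y)ᵀ * of Y) ^ j).trace := by
  have hgram : (MvPolynomial.eval fun x : m × n => Y x.1 x.2).mapMatrix (genericGram m n) =
      (of Y)ᵀ * of Y := by
    ext a b
    simp [genericGram, Matrix.mul_apply]
  rw [← hgram, ← map_pow]
  exact AddMonoidHom.map_trace (MvPolynomial.eval fun x : m × n => Y x.1 x.2) _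

namespace IsSVD

variable [Fintype m] [Preorder n] {Y U : Matrix m n ℝ} {d : n → ℝ} {V : Matrix n n ℝ}

lemma mul_right (h : IsSVD Y U d V) : Y * V = U * diagonal d := by
  rw [h.eq_mul, Matrix.mul_assoc, h.right_orthonormal, Matrix.mul_one]

lemma transpose_mul_self (h : IsSVD Y U d V) : Yᵀ * Y = V * diagonal (d ^ 2) * Vᵀ := by
  calc Yᵀ * Y = V * (diagonal d * (Uᵀ * U) * diagonal d) * Vᵀ := by
        simp only [h.eq_mul, transpose_mul, transpose_transpose, diagonal_transpose,
          Matrix.mul_assoc]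
    _ = V * diagonal (d ^ 2) * Vᵀ := by
        rw [h.left_orthonormal, Matrix.mul_one, ← diagonal_pow, pow_two]

lemma trace_transpose_mul_self_pow (h : IsSVD Y U d V) (j : ℕ) :
    ((Yᵀ * Y) ^ j).trace = ∑ i, d i ^ (2 * j) := by
  let u : (Matrix n n ℝ)ˣ := ⟨V, Vᵀ, mul_eq_one_comm.1 h.right_orthonormal, h.right_orthonormal⟩
  have hpow : (Yᵀ * Y) ^ j = u.val * diagonal ((d ^ 2) ^ j) * u⁻¹.val := by
    rw [← diagonal_pow, ← Units.conj_pow, h.transpose_mul_self]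
    rfl
  rw [hpow, trace_units_conj, trace_diagonal]
  simp [pow_mul]

lemma sum_sq (h : IsSVD Y U d V) : ∑ i, d i ^ 2 = ∑ x : m × n, Y x.1 x.2 ^ 2 := by
  have htrace := h.trace_transpose_mul_self_pow 1
  rw [pow_one, mul_one] at htrace
  rw [← htrace, Fintype.sum_prod_type, Finset.sum_comm]
  simp [trace, Matrix.mul_apply, pow_two]

end IsSVD

end SingularValueDecomposition

section SingularMeasure

open MvPolynomial

/-- The law, up to normalization, of the ordered singular values of a `(p + q) × p` matrix with
independent centred Gaussian entries of variance `v`. -/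
noncomputable def singularMeasure (v : NNReal) (p q : ℕ) : Measure (Fin p → ℝ) :=
  ((Measure.pi fun _ => gaussianReal 0 v).restrict (strictChamber p)).withDensity fun x =>
    ENNReal.ofReal (eval x (singularWeight p q))

variable (v : NNReal) (p q : ℕ)

lemma measurable_ofReal_singularWeight :
    Measurable fun x => ENNReal.ofReal (eval x (singularWeight p q)) :=
  ENNReal.measurable_ofReal.comp (measurable_mvPolynomial_eval _)

instance : IsFiniteMeasure (singularMeasure v p q) :=
  isFiniteMeasure_withDensity_ofReal
    (integrable_mvPolynomial_pi_gaussianReal v (singularWeight p q)).integrableOn.2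

lemma ae_singularMeasure_mem_strictChamber :
    ∀ᵐ x ∂singularMeasure v p q, x ∈ strictChamber p :=
  (withDensity_absolutelyContinuous _ _).ae_le
    (ae_restrict_mem isOpen_strictChamber.measurableSet)

lemma integral_singularMeasure (f : (Fin p → ℝ) → ℝ) :
    ∫ x, f x ∂singularMeasure v p q = ∫ x in strictChamber p, f x * eval x (singularWeight p q)
      ∂Measure.pi fun _ => gaussianReal 0 v := by
  rw [singularMeasure, integral_withDensity_eq_integral_toReal_smul
    (measurable_ofReal_singularWeight p q) (by simp)]
  refine setIntegral_congr_fun isOpen_strictChamber.measurableSet fun x hx => ?_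
  rw [ENNReal.toReal_ofReal (eval_singularWeight_pos q hx).le, smul_eq_mul, mul_comm]

lemma integral_singularMeasure_aeval_evenPowerSum (f : MvPolynomial ℕ ℝ) :
    ∫ x, eval x (aeval (evenPowerSum (Fin p)) f) ∂singularMeasure v p q =
      gaussianFunctional v (strictChamber p) (evenPowerSum (Fin p)) (singularWeight p q) f := by
  rw [integral_singularMeasure]
  simp only [← map_mul]
  rfl

lemma singularMeasure_real_univ :
    (singularMeasure v p q).real Set.univ =
      gaussianFunctional v (strictChamber p) (evenPowerSum (Fin p)) (singularWeight p q) 1 := by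
  simpa using integral_singularMeasure_aeval_evenPowerSum v p q 1

lemma singularMeasure_real_univ_pos {v : NNReal} (hv : v ≠ 0) :
    0 < (singularMeasure v p q).real Set.univ := by
  simpa [singularMeasure_real_univ, gaussianFunctional] using setIntegral_singularWeight_pos hv p q

lemma exists_integrable_exp_sum_sq_singularMeasure :
    ∃ ε : ℝ, 0 < ε ∧
      Integrable (fun x => Real.exp (ε * ∑ i, x i ^ 2)) (singularMeasure v p q) := by
  obtain ⟨ε, hε, hexp⟩ := exists_integrable_exp_sum_sq_pi_gaussianReal (ι := Fin p) v
  refine ⟨ε / 2, half_pos hε, ?_⟩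
  rw [singularMeasure, integrable_withDensity_iff_integrable_smul'
    (measurable_ofReal_singularWeight p q) (by simp)]
  have hweight : MemLp (fun x => eval x (singularWeight p q)) 2
      (Measure.pi fun _ => gaussianReal 0 v) :=
    (memLp_two_iff_integrable_sq (measurable_mvPolynomial_eval _).aestronglyMeasurable).2
      ((integrable_mvPolynomial_pi_gaussianReal v (singularWeight p q ^ 2)).congr
        (ae_of_all _ fun _ => map_pow _ _ _))
  have hexp' : MemLp (fun x : Fin p → ℝ => Real.exp (ε / 2 * ∑ i, x i ^ 2)) 2
      (Measure.pi fun _ => gaussianReal 0 v) := by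
    refine (memLp_two_iff_integrable_sq (Measurable.aestronglyMeasurable (by fun_prop))).2 ?_
    refine hexp.congr (ae_of_all _ fun x => ?_)
    simp only [← Real.exp_nat_mul]
    congr 1
    ring
  refine (hweight.integrable_mul hexp').integrableOn.congr_fun (fun x hx => ?_)
    isOpen_strictChamber.measurableSet
  rw [ENNReal.toReal_ofReal (eval_singularWeight_pos q hx).le, smul_eq_mul, Pi.mul_apply]

end SingularMeasure

section SingularValueLaw

lemma map_uncurry_pi_pi {α β : Type*} [Fintype α] [Fintype β] {E : Type*} [MeasurableSpace E]
    (μ : α → β → Measure E) [∀ a b, IsProbabilityMeasure (μ a b)] :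
    (Measure.pi fun a => Measure.pi (μ a)).map (fun f (x : α × β) => f x.1 x.2) =
      Measure.pi fun x : α × β => μ x.1 x.2 := by
  have h := Measure.infinitePi_map_curry_symm μ
  simp only [Measure.infinitePi_eq_pi] at h
  exact h

variable {α Ω : Type*} [Fintype α] {mΩ : MeasurableSpace Ω} {P : Measure Ω} {p q : ℕ} {v : NNReal}
  {Y : Ω → α → Fin p → ℝ} {d : Ω → Fin p → ℝ}

lemma map_entries_eq_pi (hYm : AEMeasurable Y P)
    (hY : P.map Y = Measure.pi fun _ => Measure.pi fun _ => gaussianReal 0 v) :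
    P.map (fun ω (x : α × Fin p) => Y ω x.1 x.2) = Measure.pi fun _ => gaussianReal 0 v := by
  rw [← map_uncurry_pi_pi fun _ _ => gaussianReal 0 v, ← hY,
    AEMeasurable.map_map_of_aemeasurable (Measurable.aemeasurable (by fun_prop)) hYm]
  rfl

lemma integral_comp_entries (hYm : AEMeasurable Y P)
    (hY : P.map Y = Measure.pi fun _ => Measure.pi fun _ => gaussianReal 0 v)
    {f : (α × Fin p → ℝ) → ℝ} (hf : Measurable f) :
    ∫ ω, f (fun x => Y ω x.1 x.2) ∂P = ∫ z, f z ∂Measure.pi fun _ => gaussianReal 0 v := by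
  rw [← map_entries_eq_pi hYm hY, integral_map (by fun_prop) hf.aestronglyMeasurable]

lemma exists_integrable_exp_sum_sq_singularValues (hYm : AEMeasurable Y P)
    (hY : P.map Y = Measure.pi fun _ => Measure.pi fun _ => gaussianReal 0 v)
    (hsvd : ∀ᵐ ω ∂P, ∃ U V, IsSVD (of (Y ω)) U (d ω) V) :
    ∃ ε : ℝ, 0 < ε ∧ Integrable (fun ω => Real.exp (ε * ∑ i, d ω i ^ 2)) P := by
  obtain ⟨ε, hε, hexp⟩ := exists_integrable_exp_sum_sq_pi_gaussianReal (ι := α × Fin p) v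
  rw [← map_entries_eq_pi hYm hY, integrable_map_measure
    (Measurable.aestronglyMeasurable (by fun_prop)) (by fun_prop)] at hexp
  refine ⟨ε, hε, hexp.congr ?_⟩
  filter_upwards [hsvd] with ω ⟨U, V, h⟩
  simp only [Function.comp_apply, h.sum_sq, of_apply]

lemma integral_singularValues_aeval_evenPowerSum (hYm : AEMeasurable Y P)
    (hY : P.map Y = Measure.pi fun _ => Measure.pi fun _ => gaussianReal 0 v)
    (hsvd : ∀ᵐ ω ∂P, ∃ U V, IsSVD (of (Y ω)) U (d ω) V) (f : MvPolynomial ℕ ℝ) :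
    ∫ ω, MvPolynomial.eval (d ω) (MvPolynomial.aeval (evenPowerSum (Fin p)) f) ∂P =
      gaussianFunctional v Set.univ (fun j => (genericGram α (Fin p) ^ j).trace) 1 f := by
  change _ = ∫ z in Set.univ, _ ∂_
  rw [Measure.restrict_univ, ← integral_comp_entries hYm hY (measurable_mvPolynomial_eval _)]
  refine integral_congr_ae ?_
  filter_upwards [hsvd] with ω ⟨U, V, h⟩
  rw [mul_one, ← MvPolynomial.coe_aeval_eq_eval, ← MvPolynomial.coe_aeval_eq_eval,
    RingHom.coe_coe, RingHom.coe_coe, MvPolynomial.comp_aeval_apply, MvPolynomial.comp_aeval_apply]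
  congr 2
  funext j
  simp only [MvPolynomial.aeval_eq_eval, eval_trace_genericGram_pow,
    h.trace_transpose_mul_self_pow, evenPowerSum]
  simp

lemma aemeasurable_of_map_eq_isProbabilityMeasure {E : Type*} [MeasurableSpace E] {Z : Ω → E}
    {ν : Measure E} [IsProbabilityMeasure ν] (h : P.map Z = ν) : AEMeasurable Z P := by
  have : NeZero (P.map Z) := ⟨h ▸ IsProbabilityMeasure.ne_zero ν⟩
  exact aemeasurable_of_map_neZero inferInstance

lemma integrable_exp_sum_sq_mono {ι : Type*} [Fintype ι] {Z : Ω → ι → ℝ} {ε δ : ℝ} (hεδ : ε ≤ δ)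
    (hZ : AEMeasurable Z P) (h : Integrable (fun ω => Real.exp (δ * ∑ i, Z ω i ^ 2)) P) :
    Integrable (fun ω => Real.exp (ε * ∑ i, Z ω i ^ 2)) P := by
  refine h.mono' (AEMeasurable.aestronglyMeasurable (by fun_prop)) (ae_of_all _ fun ω => ?_)
  rw [Real.norm_eq_abs, Real.abs_exp, Real.exp_le_exp]
  gcongr

theorem map_singularValues_eq_singularMeasure [IsProbabilityMeasure P]
    (hα : Fintype.card α = p + q) (hv : v ≠ 0) (hd : AEMeasurable d P)
    (hY : P.map Y = Measure.pi fun _ => Measure.pi fun _ => gaussianReal 0 v)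
    (hsvd : ∀ᵐ ω ∂P, ∃ U V, IsSVD (of (Y ω)) U (d ω) V) :
    P.map d = (singularMeasure v p q Set.univ)⁻¹ • singularMeasure v p q := by
  have hYm : AEMeasurable Y P := aemeasurable_of_map_eq_isProbabilityMeasure hY
  have hmass := singularMeasure_real_univ_pos p q hv
  have hinv : (singularMeasure v p q Set.univ)⁻¹ ≠ ⊤ :=
    ENNReal.inv_ne_top.2 ((measureReal_ne_zero_iff (measure_ne_top _ _)).1 hmass.ne')
  have := Measure.isProbabilityMeasure_map hd
  have := Measure.smul_finite (singularMeasure v p q) hinv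
  obtain ⟨ε₁, hε₁, hexp₁⟩ := exists_integrable_exp_sum_sq_singularValues hYm hY hsvd
  obtain ⟨ε₂, hε₂, hexp₂⟩ := exists_integrable_exp_sum_sq_singularMeasure v p q
  refine measure_eq_of_integral_evenPowerSum_eq (lt_min hε₁ hε₂) ?_ ?_ ?_ ?_ fun f => ?_
  · rw [integrable_map_measure (Measurable.aestronglyMeasurable (by fun_prop)) hd]
    exact integrable_exp_sum_sq_mono (min_le_left _ _) hd hexp₁
  · exact (integrable_exp_sum_sq_mono (min_le_right _ _) aemeasurable_id hexp₂).smul_measure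
      hinv
  · have hset : MeasurableSet {x : Fin p → ℝ | Antitone x ∧ 0 ≤ x} :=
      isClosed_antitone.measurableSet.inter measurableSet_Ici
    rw [ae_map_iff hd hset]
    filter_upwards [hsvd] with ω ⟨U, V, h⟩ using ⟨h.antitone, h.nonneg⟩
  · exact Measure.ae_smul_measure (ae_singularMeasure_mem_strictChamber v p q) _
  · have hloop := satisfiesLoopEquations_genericGram α (Fin p) hv
    rw [hα, Fintype.card_fin] at hloop
    have hratio := (satisfiesLoopEquations_singularWeight hv p q).map_one_mul_comm hloop f
    simp only [← integral_singularMeasure_aeval_evenPowerSum,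
      ← integral_singularValues_aeval_evenPowerSum hYm hY hsvd, map_one, integral_const,
      probReal_univ, smul_eq_mul, mul_one, one_mul] at hratio
    rw [integral_smul_measure, hratio, ENNReal.toReal_inv, ← measureReal_def, smul_eq_mul,
      inv_mul_cancel_left₀ hmass.ne',
      integral_map hd (measurable_mvPolynomial_eval _).aestronglyMeasurable]

end SingularValueLaw

section OrthonormalColumns

variable {m n : Type*} [Fintype m] [DecidableEq n]

lemma isCompact_setOf_transpose_mul_self_eq_one :
    IsCompact {U : Matrix m n ℝ | Uᵀ * U = 1} := by
  have hbox : IsCompact (Set.univ.pi fun _ : m => Set.univ.pi fun _ : n => Set.Icc (-1 : ℝ) 1) :=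
    isCompact_univ_pi fun _ => isCompact_univ_pi fun _ => isCompact_Icc
  refine hbox.of_isClosed_subset (isClosed_eq (by fun_prop) continuous_const)
    fun (U : Matrix m n ℝ) (hU : Uᵀ * U = 1) i _ j _ => ?_
  have hsum : ∑ x, U x j * U x j = 1 := by
    simpa [Matrix.mul_apply] using congrFun (congrFun hU j) j
  have hle : U i j * U i j ≤ 1 :=
    hsum ▸ Finset.single_le_sum (f := fun x => U x j * U x j) (fun _ _ => mul_self_nonneg _)
      (Finset.mem_univ i)
  exact abs_le.1 (abs_le_one_iff_mul_self_le_one.2 hle)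

end OrthonormalColumns

section NullHypothesis

variable {m n : Type*} [Fintype m] [Fintype n] [DecidableEq n] {Y U : Matrix m n ℝ} {d : n → ℝ}
  {V : Matrix n n ℝ}

lemma IsSVD.eq_diag [Preorder n] (h : IsSVD Y U d V) : d = (Uᵀ * Y * V).diag := by
  rw [Matrix.mul_assoc, h.mul_right, ← Matrix.mul_assoc, h.left_orthonormal, Matrix.one_mul,
    diag_diagonal]

lemma isSVD_iff [Preorder n] : IsSVD Y U d V ↔
    Y = U * diagonal d * Vᵀ ∧ Uᵀ * U = 1 ∧ Vᵀ * V = 1 ∧ Antitone d ∧ 0 ≤ d :=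
  ⟨fun ⟨hY, hU, hV, hd, hd0⟩ => ⟨hY, hU, hV, hd, hd0⟩,
    fun ⟨hY, hU, hV, hd, hd0⟩ => ⟨hY, hU, hV, hd, hd0⟩⟩

lemma isClosed_setOf_isSVD_diag [Preorder n] :
    IsClosed {x : (Matrix m n ℝ × Matrix n n ℝ) × Matrix m n ℝ |
      IsSVD x.2 x.1.1 (x.1.1ᵀ * x.2 * x.1.2).diag x.1.2} := by
  have hdiag : Continuous fun x : (Matrix m n ℝ × Matrix n n ℝ) × Matrix m n ℝ =>
      (x.1.1ᵀ * x.2 * x.1.2).diag := by fun_prop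
  simp only [isSVD_iff]
  exact (isClosed_eq (by fun_prop) (by fun_prop)).and <|
    (isClosed_eq (by fun_prop) continuous_const).and <|
    (isClosed_eq (by fun_prop) continuous_const).and <|
    (isClosed_antitone.preimage hdiag).and (isClosed_le continuous_const hdiag)

lemma isClosed_setOf_exists_isSVD [Preorder n] {F : Set (Matrix m n ℝ × Matrix n n ℝ)}
    (hF : IsClosed F) : IsClosed {Y | ∃ U d V, IsSVD Y U d V ∧ (U, V) ∈ F} := by
  let K : Set (Matrix m n ℝ × Matrix n n ℝ) := {U | Uᵀ * U = 1} ×ˢ {V | Vᵀ * V = 1}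
  have hK : IsCompact K := isCompact_setOf_transpose_mul_self_eq_one.prod
    isCompact_setOf_transpose_mul_self_eq_one
  have : CompactSpace K := isCompact_iff_compactSpace.1 hK
  have hpair : Continuous fun x : K × Matrix m n ℝ => (x.1.1, x.2) := by fun_prop
  have hclosed : IsClosed {x : K × Matrix m n ℝ |
      IsSVD x.2 x.1.1.1 (x.1.1.1ᵀ * x.2 * x.1.1.2).diag x.1.1.2 ∧ x.1.1 ∈ F} :=
    (isClosed_setOf_isSVD_diag.preimage hpair).and (hF.preimage (by fun_prop))
  convert! isClosedMap_snd_of_compactSpace _ hclosed using 1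
  ext Y
  constructor
  · rintro ⟨U, d, V, h, hUV⟩
    exact ⟨(⟨(U, V), h.left_orthonormal, h.right_orthonormal⟩, Y), ⟨h.eq_diag ▸ h, hUV⟩, rfl⟩
  · rintro ⟨⟨UV, Y⟩, ⟨h, hUV⟩, rfl⟩
    exact ⟨_, _, _, h, hUV⟩

lemma exists_apply_ne_zero_of_mul_eq_one {R : Type*} [Semiring R] [Nontrivial R]
    {A B : Matrix n n R} (h : A * B = 1) (i : n) : ∃ j, A i j ≠ 0 := by
  by_contra! hzero
  simpa [Matrix.mul_apply, hzero] using congrFun (congrFun h i) i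

lemma IsSVD.sq_eq_of_apply_ne_zero [Preorder n] (h : IsSVD Y U d V) {w : n → ℝ}
    (hY : Yᵀ * Y = diagonal w) {j l : n} (hV : V j l ≠ 0) : d l ^ 2 = w j := by
  have hcomm : diagonal w * V = V * diagonal (d ^ 2) := by
    rw [← hY, h.transpose_mul_self, Matrix.mul_assoc, h.right_orthonormal, Matrix.mul_one]
  have hentry := congrFun (congrFun hcomm j) l
  rw [diagonal_mul, mul_diagonal, mul_comm] at hentry
  exact (mul_left_cancel₀ hV hentry).symm

lemma IsSVD.apply_eq_zero_of_isTop [Preorder n] (h : IsSVD Y U d V) {w : n → ℝ}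
    (hY : Yᵀ * Y = diagonal w) {b l : n} (hl : IsTop l) {j : n} (hj : w b < w j) :
    V j l = 0 := by
  by_contra hV
  obtain ⟨i, hi⟩ := exists_apply_ne_zero_of_mul_eq_one (mul_eq_one_comm.1 h.right_orthonormal) b
  rw [← h.sq_eq_of_apply_ne_zero hY hi, ← h.sq_eq_of_apply_ne_zero hY hV] at hj
  exact hj.not_ge (pow_le_pow_left₀ (h.nonneg l) (h.antitone (hl i)) 2)

lemma IsSVD.mul_transpose_mul_mul_apply [Preorder n] (h : IsSVD Y U d V) (B : Matrix m n ℝ)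
    {b l : n} (hV : ∀ j ≠ b, V j l = 0) :
    d l * (Uᵀ * B * V) l l = V b l ^ 2 * (Yᵀ * B) b b := by
  have hright (A : Matrix n n ℝ) (i : n) : (A * V) i l = A i b * V b l := by
    rw [Matrix.mul_apply, Finset.sum_eq_single b (fun j _ hj => by rw [hV j hj, mul_zero])
      (by simp)]
  have hleft (A : Matrix n n ℝ) (i : n) : (Vᵀ * A) l i = V b l * A b i := by
    rw [Matrix.mul_apply, Finset.sum_eq_single b
      (fun j _ hj => by rw [transpose_apply, hV j hj, zero_mul]) (by simp), transpose_apply]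
  calc d l * (Uᵀ * B * V) l l = (diagonal d * (Uᵀ * B * V)) l l := (diagonal_mul _ _ _ _).symm
    _ = ((U * diagonal d)ᵀ * B * V) l l := by
        rw [transpose_mul, diagonal_transpose]
        simp only [Matrix.mul_assoc]
    _ = (Vᵀ * (Yᵀ * B) * V) l l := by
        rw [← h.mul_right, transpose_mul, Matrix.mul_assoc Vᵀ]
    _ = V b l ^ 2 * (Yᵀ * B) b b := by
        rw [hright, hleft]
        ring

/-- The matrix whose `j`-th column is `c j` times the standard basis vector at `τ j`. -/
def scaledEmbedding [DecidableEq m] {R : Type*} [Zero R] (τ : n ↪ m) (c : n → R) : Matrix m n R :=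
  of fun i j => if i = τ j then c j else 0

omit [Fintype n] [DecidableEq n] in
lemma transpose_scaledEmbedding_mul_apply [DecidableEq m] {R : Type*} [Semiring R] {k : Type*}
    (τ : n ↪ m) (c : n → R) (A : Matrix m k R) (j : n) (i : k) :
    ((scaledEmbedding τ c)ᵀ * A) j i = c j * A (τ j) i := by
  simp [scaledEmbedding, Matrix.mul_apply]

omit [Fintype n] in
lemma transpose_mul_self_scaledEmbedding [DecidableEq m] {R : Type*} [Semiring R] (τ : n ↪ m)
    (c : n → R) : (scaledEmbedding τ c)ᵀ * scaledEmbedding τ c = diagonal (c ^ 2) := by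
  ext i j
  rw [transpose_scaledEmbedding_mul_apply]
  rcases eq_or_ne i j with rfl | hij
  · simp [scaledEmbedding, pow_two]
  · simp [scaledEmbedding, hij]

/- Testing on the matrix that maps `e_b` to `e_a` and doubles the other basis vectors isolates the
entry `B a b`, because its last right singular vector is a multiple of `e_b`. -/
lemma eq_zero_of_forall_exists_isSVD [Preorder n] (hcard : Fintype.card n ≤ Fintype.card m)
    {l : n} (hl : IsTop l) {B : Matrix m n ℝ}
    (h : ∀ Y : Matrix m n ℝ, ∃ U d V, IsSVD Y U d V ∧ (Uᵀ * B * V) l l = 0) : B = 0 := by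
  classical
  ext a b
  rw [Matrix.zero_apply]
  obtain ⟨τ₀⟩ := Function.Embedding.nonempty_of_card_le hcard
  let τ := τ₀.setValue b a
  let c : n → ℝ := fun j => if j = b then 1 else 2
  obtain ⟨U, d, V, hsvd, hUBV⟩ := h (scaledEmbedding τ c)
  have hgram := transpose_mul_self_scaledEmbedding τ c
  have hV (j : n) (hj : j ≠ b) : V j l = 0 :=
    hsvd.apply_eq_zero_of_isTop hgram (b := b) hl (by norm_num [c, hj])
  have hVb : V b l ≠ 0 := by
    obtain ⟨j, hj⟩ := exists_apply_ne_zero_of_mul_eq_one hsvd.right_orthonormal l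
    rwa [transpose_apply, not_imp_comm.1 (hV j) hj] at hj
  have hentry := hsvd.mul_transpose_mul_mul_apply B hV
  rw [hUBV, mul_zero, transpose_scaledEmbedding_mul_apply, Function.Embedding.setValue_eq] at hentry
  simpa [c, hVb] using hentry.symm

lemma eq_zero_of_ae_exists_isSVD [Preorder n] (hcard : Fintype.card n ≤ Fintype.card m) {l : n}
    (hl : IsTop l) {Ω : Type*} {mΩ : MeasurableSpace Ω} {P : Measure Ω} {Y : Ω → m → n → ℝ}
    {B : Matrix m n ℝ} {v : NNReal} (hv : v ≠ 0)
    (hY : P.map Y = Measure.pi fun i => Measure.pi fun j => gaussianReal (B i j) v)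
    (h : ∀ᵐ ω ∂P, ∃ U d V, IsSVD (of (Y ω)) U d V ∧ (Uᵀ * B * V) l l = 0) : B = 0 := by
  have hclosed : IsClosed {Y : m → n → ℝ | ∃ U d V, IsSVD (of Y) U d V ∧ (Uᵀ * B * V) l l = 0} :=
    isClosed_setOf_exists_isSVD (F := {x : Matrix m n ℝ × Matrix n n ℝ | (x.1ᵀ * B * x.2) l l = 0})
      (isClosed_eq (by fun_prop) continuous_const)
  have (i : m) : IsProbabilityMeasure (Measure.pi fun j => gaussianReal (B i j) v) :=
    Measure.pi.instIsProbabilityMeasure _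
  rw [← ae_map_iff (aemeasurable_of_map_eq_isProbabilityMeasure hY) hclosed.measurableSet, hY] at h
  have (i : m) (j : n) := isOpenPosMeasure_gaussianReal (B i j) hv
  have (i : m) : (Measure.pi fun j => gaussianReal (B i j) v).IsOpenPosMeasure :=
    Measure.pi.isOpenPosMeasure _
  have := Measure.pi.isOpenPosMeasure fun i => Measure.pi fun j => gaussianReal (B i j) v
  refine eq_zero_of_forall_exists_isSVD hcard hl fun Y => ?_
  exact Set.eq_univ_iff_forall.1 (hclosed.ae_eq_univ_iff_eq.1 (Filter.eventuallyEq_univ.2 h)) Y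

lemma transpose_mul_mul_apply_eq_zero {B : Matrix m n ℝ} (hU : Uᵀ * U = 1) (hV : Vᵀ * V = 1)
    {w : n → ℝ} (h : U * diagonal w * Uᵀ * B * (V * diagonal w * Vᵀ) = 0) {l : n} (hw : w l ≠ 0) :
    (Uᵀ * B * V) l l = 0 := by
  have hmasked : diagonal w * (Uᵀ * B * V) * diagonal w = 0 := by
    calc diagonal w * (Uᵀ * B * V) * diagonal w
        = Uᵀ * U * diagonal w * (Uᵀ * B * V) * diagonal w * (Vᵀ * V) := by
          rw [hU, hV, Matrix.one_mul, Matrix.mul_one]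
      _ = Uᵀ * (U * diagonal w * Uᵀ * B * (V * diagonal w * Vᵀ)) * V := by
          simp only [Matrix.mul_assoc]
      _ = 0 := by rw [h, Matrix.mul_zero, Matrix.zero_mul]
  have hentry := congrFun (congrFun hmasked l) l
  rw [mul_diagonal, diagonal_mul] at hentry
  simpa [hw] using hentry

end NullHypothesis

section ProbabilityIntegralTransform

variable (m : Measure ℝ)

lemma antitone_measureReal_Ioi [IsFiniteMeasure m] : Antitone fun z => m.real (Set.Ioi z) :=
  fun _ _ h => measureReal_mono (Set.Ioi_subset_Ioi h)

lemma measureReal_Ioi_eq_one_sub_cdf [IsProbabilityMeasure m] (z : ℝ) :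
    m.real (Set.Ioi z) = 1 - cdf m z := by
  rw [cdf_eq_real, ← Set.compl_Iic, probReal_compl_eq_one_sub measurableSet_Iic]

lemma continuous_cdf [IsProbabilityMeasure m] [NullSingletonClass m] : Continuous (cdf m) := by
  refine continuous_iff_continuousAt.2 fun x => ?_
  rw [(monotone_cdf m).continuousAt_iff_leftLim_eq_rightLim, StieltjesFunction.rightLim_eq]
  have hjump := (cdf m).measure_singleton x
  rw [measure_cdf, measure_singleton, eq_comm, ENNReal.ofReal_eq_zero, sub_nonpos] at hjump
  exact ((monotone_cdf m).leftLim_le le_rfl).antisymm hjump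

lemma measure_setOf_measureReal_Ioi_le [IsProbabilityMeasure m] [NullSingletonClass m] {a : ℝ}
    (h₀ : 0 ≤ a) (h₁ : a < 1) : m {z | m.real (Set.Ioi z) ≤ a} = ENNReal.ofReal a := by
  have hcont : Continuous fun z => m.real (Set.Ioi z) := by
    simp only [measureReal_Ioi_eq_one_sub_cdf]
    exact continuous_const.sub (continuous_cdf m)
  have hbot : Filter.Tendsto (fun z => m.real (Set.Ioi z)) Filter.atBot (nhds 1) := by
    simpa [measureReal_Ioi_eq_one_sub_cdf] using (tendsto_cdf_atBot m).const_sub 1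
  have htop : Filter.Tendsto (fun z => m.real (Set.Ioi z)) Filter.atTop (nhds 0) := by
    simpa [measureReal_Ioi_eq_one_sub_cdf] using (tendsto_cdf_atTop m).const_sub 1
  rcases {z | m.real (Set.Ioi z) ≤ a}.eq_empty_or_nonempty with hempty | hne
  · have ha : a = 0 := le_antisymm (ge_of_tendsto' htop fun z =>
      (not_le.1 (Set.eq_empty_iff_forall_notMem.1 hempty z)).le) h₀
    rw [hempty, measure_empty, ha, ENNReal.ofReal_zero]
  have hbdd : BddBelow {z | m.real (Set.Ioi z) ≤ a} := by
    obtain ⟨z, hz⟩ := (hbot.eventually_const_lt h₁).exists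
    exact ⟨z, fun y hy => not_lt.1 fun hyz =>
      (hz.trans_le (antitone_measureReal_Ioi m hyz.le)).not_ge hy⟩
  have hmem := (isClosed_le hcont continuous_const).csInf_mem hne hbdd
  set c := sInf {z | m.real (Set.Ioi z) ≤ a}
  have hset : {z | m.real (Set.Ioi z) ≤ a} = Set.Ici c :=
    Set.Subset.antisymm (fun z hz => csInf_le hbdd hz)
      fun z hz => (antitone_measureReal_Ioi m hz).trans hmem
  have hc : m.real (Set.Ioi c) = a := by
    refine le_antisymm hmem (ge_of_tendsto
      (hcont.continuousWithinAt (s := Set.Iio c) (x := c)).tendsto ?_)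
    filter_upwards [self_mem_nhdsWithin] with z hz
    exact (not_le.1 fun hle => (Set.mem_Iio.1 hz).not_ge (hset.subset hle)).le
  rw [hset, ← measure_congr Ioi_ae_eq_Ici, ← ofReal_measureReal, hc]

theorem map_measureReal_Ioi_eq_uniform [IsProbabilityMeasure m] [NullSingletonClass m] :
    m.map (fun z => m.real (Set.Ioi z)) = volume.restrict (Set.Ioo 0 1) := by
  have hmeas : Measurable fun z => m.real (Set.Ioi z) := (antitone_measureReal_Ioi m).measurable
  have := Measure.isProbabilityMeasure_map (μ := m) hmeas.aemeasurable
  refine Measure.ext_of_Iic _ _ fun a => ?_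
  rw [Measure.map_apply hmeas measurableSet_Iic, restrict_Ioo_eq_restrict_Ioc,
    Measure.restrict_apply measurableSet_Iic, Set.inter_comm, Set.Ioc_inter_Iic, Real.volume_Ioc,
    sub_zero]
  change m {z | m.real (Set.Ioi z) ≤ a} = _
  rcases lt_or_ge a 0 with ha | ha
  · have hempty : {z | m.real (Set.Ioi z) ≤ a} = ∅ :=
      Set.eq_empty_of_forall_notMem fun z hz => (ha.trans_le measureReal_nonneg).not_ge hz
    rw [hempty, measure_empty, ENNReal.ofReal_of_nonpos (min_le_of_right_le ha.le)]
  rcases lt_or_ge a 1 with ha₁ | ha₁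
  · rw [min_eq_right ha₁.le, measure_setOf_measureReal_Ioi_le m ha ha₁]
  · have huniv : {z | m.real (Set.Ioi z) ≤ a} = Set.univ :=
      Set.eq_univ_of_forall fun z => measureReal_le_one.trans ha₁
    rw [huniv, measure_univ, min_eq_left ha₁, ENNReal.ofReal_one]

theorem map_measureReal_Ioi_div_eq_uniform [IsFiniteMeasure m] [NullSingletonClass m] :
    m.map (fun z => m.real (Set.Ioi z) / m.real Set.univ) =
      m Set.univ • volume.restrict (Set.Ioo 0 1) := by
  rcases eq_or_ne m 0 with rfl | hm
  · simp
  have hne : NeZero m := ⟨hm⟩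
  have hsing : NullSingletonClass ((m Set.univ)⁻¹ • m) := ⟨fun x => by simp⟩
  have huniform := map_measureReal_Ioi_eq_uniform ((m Set.univ)⁻¹ • m)
  rw [Measure.map_smul] at huniform
  simp only [measureReal_ennreal_smul_apply] at huniform
  rw [← huniform, smul_smul, ENNReal.mul_inv_cancel (NeZero.ne _) (measure_ne_top m _), one_smul]
  simp only [ENNReal.toReal_inv, ← measureReal_def, div_eq_inv_mul]

end ProbabilityIntegralTransform

section ConditionalMeasure

variable {ι : Type*} [DecidableEq ι]

/-- The unnormalized conditional law of the coordinate `i`, given the remaining coordinates of `x`,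
under the measure with density `w` with respect to `Measure.pi μ`. -/
noncomputable def conditionalMeasure (μ : ι → Measure ℝ) (w : (ι → ℝ) → ENNReal) (i : ι)
    (x : ι → ℝ) : Measure ℝ :=
  (μ i).withDensity fun z => w (Function.update x i z)

variable (μ : ι → Measure ℝ) {w : (ι → ℝ) → ENNReal} (i : ι)

lemma conditionalMeasure_update (w : (ι → ℝ) → ENNReal) (x : ι → ℝ) (z : ℝ) :
    conditionalMeasure μ w i (Function.update x i z) = conditionalMeasure μ w i x := by
  simp only [conditionalMeasure, Function.update_idem]

instance [NullSingletonClass (μ i)] (w : (ι → ℝ) → ENNReal) (x : ι → ℝ) :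
    NullSingletonClass (conditionalMeasure μ w i x) :=
  inferInstanceAs (NullSingletonClass ((μ i).withDensity _))

lemma measurable_conditionalMeasure_preimage [SFinite (μ i)] (hw : Measurable w)
    {s : Set ((ι → ℝ) × ℝ)} (hs : MeasurableSet s) :
    Measurable fun x => conditionalMeasure μ w i x (Prod.mk x ⁻¹' s) := by
  have hupdate : Measurable fun y : (ι → ℝ) × ℝ => Function.update y.1 i y.2 :=
    measurable_update'
  convert ((hw.comp hupdate).indicator hs).lintegral_prod_right' (ν := μ i) using 2 with x
  rw [conditionalMeasure, withDensity_apply _ (measurable_prodMk_left hs),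
    ← lintegral_indicator (measurable_prodMk_left hs)]
  rfl

/-- The conditional survival function of the coordinate `i` under the measure with density `w` with
respect to `Measure.pi μ`, evaluated at the coordinate itself. -/
noncomputable def conditionalSurvival (μ : ι → Measure ℝ) (w : (ι → ℝ) → ENNReal) (i : ι)
    (x : ι → ℝ) : ℝ :=
  (conditionalMeasure μ w i x).real (Set.Ioi (x i)) / (conditionalMeasure μ w i x).real Set.univ

lemma measurable_conditionalSurvival [SFinite (μ i)] (hw : Measurable w) :
    Measurable (conditionalSurvival μ w i) := by
  have htail : MeasurableSet {y : (ι → ℝ) × ℝ | y.1 i < y.2} :=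
    measurableSet_lt (by fun_prop) (by fun_prop)
  exact (measurable_conditionalMeasure_preimage μ i hw htail).ennreal_toReal.div
    (measurable_conditionalMeasure_preimage μ i hw MeasurableSet.univ).ennreal_toReal

lemma conditionalSurvival_update (w : (ι → ℝ) → ENNReal) (x : ι → ℝ) (z : ℝ) :
    conditionalSurvival μ w i (Function.update x i z) =
      (conditionalMeasure μ w i x).real (Set.Ioi z) /
        (conditionalMeasure μ w i x).real Set.univ := by
  rw [conditionalSurvival, conditionalMeasure_update, Function.update_self]

lemma map_conditionalSurvival_update_eq_uniform [NullSingletonClass (μ i)] (x : ι → ℝ)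
    [IsFiniteMeasure (conditionalMeasure μ w i x)] :
    (conditionalMeasure μ w i x).map (fun z => conditionalSurvival μ w i (Function.update x i z)) =
      conditionalMeasure μ w i x Set.univ • volume.restrict (Set.Ioo 0 1) := by
  simp only [conditionalSurvival_update]
  exact map_measureReal_Ioi_div_eq_uniform (conditionalMeasure μ w i x)

variable [Fintype ι] [∀ j, IsProbabilityMeasure (μ j)]

lemma lintegral_conditionalMeasure_preimage_update (hw : Measurable w) {s : Set (ι → ℝ)}
    (hs : MeasurableSet s) :
    ∫⁻ x, conditionalMeasure μ w i x (Function.update x i ⁻¹' s) ∂Measure.pi μ =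
      (Measure.pi μ).withDensity w s := by
  rw [withDensity_apply _ hs, ← lintegral_indicator hs,
    lintegral_pi_eq_lintegral_lintegral_update μ (hw.indicator hs) i]
  refine lintegral_congr fun x => ?_
  have hslice : MeasurableSet (Function.update x i ⁻¹' s) := measurable_update x hs
  rw [conditionalMeasure, withDensity_apply _ hslice, ← lintegral_indicator hslice]
  rfl

theorem map_conditionalSurvival_eq_uniform [NullSingletonClass (μ i)] (hw : Measurable w)
    [IsFiniteMeasure ((Measure.pi μ).withDensity w)] :
    ((Measure.pi μ).withDensity w).map (conditionalSurvival μ w i) =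
      (Measure.pi μ).withDensity w Set.univ • volume.restrict (Set.Ioo 0 1) := by
  have hT : Measurable (conditionalSurvival μ w i) := measurable_conditionalSurvival μ i hw
  have hC : Measurable fun x => conditionalMeasure μ w i x Set.univ := by
    simpa only [Set.preimage_univ] using
      measurable_conditionalMeasure_preimage μ i hw MeasurableSet.univ
  have htotal : ∫⁻ x, conditionalMeasure μ w i x Set.univ ∂Measure.pi μ =
      (Measure.pi μ).withDensity w Set.univ := by
    simpa only [Set.preimage_univ] using
      lintegral_conditionalMeasure_preimage_update μ i hw MeasurableSet.univ
  have hfinite : ∀ᵐ x ∂Measure.pi μ, conditionalMeasure μ w i x Set.univ < ⊤ :=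
    ae_lt_top hC (htotal.trans_ne (measure_ne_top _ _))
  ext A hA
  rw [Measure.map_apply hT hA, ← lintegral_conditionalMeasure_preimage_update μ i hw (hT hA),
    Measure.smul_apply, smul_eq_mul, ← htotal, ← lintegral_mul_const _ hC]
  refine lintegral_congr_ae (hfinite.mono fun x hx => ?_)
  have : IsFiniteMeasure (conditionalMeasure μ w i x) := ⟨hx⟩
  have hslice : Measurable fun z => conditionalSurvival μ w i (Function.update x i z) :=
    hT.comp (measurable_update x)
  have huniform := congrArg (fun m : Measure ℝ => m A)
    (map_conditionalSurvival_update_eq_uniform μ (w := w) i x)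
  rwa [Measure.map_apply hslice hA] at huniform

end ConditionalMeasure

section Slice

variable {p : ℕ}

lemma update_mem_strictChamber_iff {x : Fin p → ℝ} (hx : x ∈ strictChamber p) {k l : Fin p}
    (hkl : k ⋖ l) (z : ℝ) :
    Function.update x k z ∈ strictChamber p ↔ x l < z ∧ ∀ j < k, z < x j := by
  constructor
  · intro hz
    refine ⟨?_, fun j hj => ?_⟩
    · simpa [hkl.lt.ne'] using hz.1 hkl.lt
    · simpa [hj.ne] using hz.1 hj
  · rintro ⟨hlower, hupper⟩
    refine ⟨fun i j hij => ?_, fun i => ?_⟩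
    · rcases eq_or_ne i k with rfl | hi
      · rw [Function.update_self, Function.update_of_ne hij.ne']
        exact (hx.1.antitone (hkl.ge_of_gt hij)).trans_lt hlower
      rcases eq_or_ne j k with rfl | hj
      · rw [Function.update_self, Function.update_of_ne hi]
        exact hupper i hij
      · rw [Function.update_of_ne hi, Function.update_of_ne hj]
        exact hx.1 hij
    · rcases eq_or_ne i k with rfl | hi
      · rw [Function.update_self]
        exact (hx.2 l).trans hlower
      · rw [Function.update_of_ne hi]
        exact hx.2 i

lemma prod_prod_Ioi_eq_prod_erase_mul {ι M : Type*} [Fintype ι] [LinearOrder ι]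
    [LocallyFiniteOrderTop ι] [CommMonoid M] {f : ι → ι → M} (hf : ∀ i j, f i j = f j i) (k : ι) :
    ∏ i, ∏ j ∈ Finset.Ioi i, f i j = (∏ j ∈ Finset.univ.erase k, f k j) *
      ∏ i ∈ Finset.univ.erase k, ∏ j ∈ (Finset.Ioi i).erase k, f i j := by
  have hrow (i : ι) : ∏ j ∈ Finset.Ioi i, f i j =
      (if i < k then f i k else 1) * ∏ j ∈ (Finset.Ioi i).erase k, f i j := by
    split_ifs with hik
    · exact (Finset.mul_prod_erase _ _ (Finset.mem_Ioi.2 hik)).symm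
    · rw [one_mul, Finset.erase_eq_of_notMem (by simpa using hik)]
  have hcol : ∏ j ∈ Finset.univ.erase k, f k j =
      (∏ j ∈ Finset.Ioi k, f k j) * ∏ i ∈ Finset.univ.erase k, if i < k then f i k else 1 := by
    rw [← Finset.prod_filter_mul_prod_filter_not (Finset.univ.erase k) (k < ·),
      Finset.prod_ite, Finset.prod_const_one, mul_one]
    congr 1
    · exact Finset.prod_congr (by ext j; simpa using fun h => h.ne') fun _ _ => rfl
    · refine Finset.prod_congr ?_ fun i _ => hf k i
      ext i
      simp only [Finset.mem_filter, Finset.mem_erase, Finset.mem_univ, and_true, not_lt]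
      exact and_congr_right fun h => h.le_iff_lt
  rw [← Finset.mul_prod_erase _ _ (Finset.mem_univ k), hcol, mul_assoc, ← Finset.prod_mul_distrib]
  exact congrArg _ (Finset.prod_congr rfl fun i _ => hrow i)

end Slice

section ConditionalDensity

open MvPolynomial

variable {p : ℕ}

/-- The conditional density of the `k`-th singular value given the remaining ones, up to a factor
depending only on the latter. -/
noncomputable def conditionalDensity (v : NNReal) (q : ℕ) (k : Fin p) (x : Fin p → ℝ) (z : ℝ) : ℝ :=
  Real.exp (-(z ^ 2) / (2 * v)) * z ^ q * ∏ j ∈ Finset.univ.erase k, |z ^ 2 - x j ^ 2|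

lemma conditionalDensity_nonneg (v : NNReal) (q : ℕ) (k : Fin p) (x : Fin p → ℝ) {z : ℝ}
    (hz : 0 ≤ z) : 0 ≤ conditionalDensity v q k x z := by
  unfold conditionalDensity
  positivity

lemma measurable_conditionalDensity (v : NNReal) (q : ℕ) (k : Fin p) (x : Fin p → ℝ) :
    Measurable (conditionalDensity v q k x) := by
  unfold conditionalDensity
  fun_prop

lemma abs_eval_update_singularWeight (q : ℕ) (k : Fin p) (x : Fin p → ℝ) (z : ℝ) :
    |eval (Function.update x k z) (singularWeight p q)| =
      (∏ i ∈ Finset.univ.erase k, |x i| ^ q) *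
        (∏ i ∈ Finset.univ.erase k, ∏ j ∈ (Finset.Ioi i).erase k, |x i ^ 2 - x j ^ 2|) *
        (|z| ^ q * ∏ j ∈ Finset.univ.erase k, |z ^ 2 - x j ^ 2|) := by
  have hne {s : Finset (Fin p)} {j : Fin p} (hj : j ∈ s.erase k) :
      Function.update x k z j = x j :=
    Function.update_of_ne (Finset.ne_of_mem_erase hj) _ _
  have hpow : ∏ i ∈ Finset.univ.erase k, |Function.update x k z i| ^ q =
      ∏ i ∈ Finset.univ.erase k, |x i| ^ q :=
    Finset.prod_congr rfl fun i hi => by rw [hne hi]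
  have hcross : ∏ j ∈ Finset.univ.erase k, |z ^ 2 - Function.update x k z j ^ 2| =
      ∏ j ∈ Finset.univ.erase k, |z ^ 2 - x j ^ 2| :=
    Finset.prod_congr rfl fun j hj => by rw [hne hj]
  have hpair : ∏ i ∈ Finset.univ.erase k, ∏ j ∈ (Finset.Ioi i).erase k,
        |Function.update x k z i ^ 2 - Function.update x k z j ^ 2| =
      ∏ i ∈ Finset.univ.erase k, ∏ j ∈ (Finset.Ioi i).erase k, |x i ^ 2 - x j ^ 2| :=
    Finset.prod_congr rfl fun i hi => Finset.prod_congr rfl fun j hj => by rw [hne hi, hne hj]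
  simp only [singularWeight, map_mul, map_prod, map_pow, map_sub, eval_X, abs_mul,
    Finset.abs_prod, abs_pow]
  rw [prod_prod_Ioi_eq_prod_erase_mul (fun i j => abs_sub_comm _ _) k,
    ← Finset.mul_prod_erase Finset.univ _ (Finset.mem_univ k), Function.update_self,
    hpow, hcross, hpair]
  ring

lemma exists_gaussianPDFReal_mul_eval_singularWeight_eq {v : NNReal} (hv : v ≠ 0) (q : ℕ)
    (k : Fin p) {x : Fin p → ℝ} (hx : x ∈ strictChamber p) :
    ∃ c > 0, ∀ z, Function.update x k z ∈ strictChamber p →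
      gaussianPDFReal 0 v z * eval (Function.update x k z) (singularWeight p q) =
        c * conditionalDensity v q k x z := by
  have hfactor : ∃ c, ∀ z, Function.update x k z ∈ strictChamber p →
      gaussianPDFReal 0 v z * eval (Function.update x k z) (singularWeight p q) =
        c * conditionalDensity v q k x z := by
    refine ⟨(Real.sqrt (2 * Real.pi * v))⁻¹ * ((∏ i ∈ Finset.univ.erase k, |x i| ^ q) *
      ∏ i ∈ Finset.univ.erase k, ∏ j ∈ (Finset.Ioi i).erase k, |x i ^ 2 - x j ^ 2|),
      fun z hz => ?_⟩
    have hz₀ : 0 < z := by simpa using hz.2 k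
    rw [← abs_of_pos (eval_singularWeight_pos q hz), abs_eval_update_singularWeight,
      abs_of_pos hz₀, gaussianPDFReal, sub_zero, conditionalDensity]
    ring
  obtain ⟨c, hc⟩ := hfactor
  have hpos : 0 < c * conditionalDensity v q k x (x k) := by
    rw [← hc (x k) (by rwa [Function.update_eq_self]), Function.update_eq_self]
    exact mul_pos (gaussianPDFReal_pos _ _ _ hv) (eval_singularWeight_pos q hx)
  exact ⟨c, pos_of_mul_pos_left hpos (conditionalDensity_nonneg v q k x (hx.2 k).le), hc⟩

/-- The density of `singularMeasure` with respect to the centred Gaussian product measure. -/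
noncomputable def singularDensity (p q : ℕ) : (Fin p → ℝ) → ENNReal :=
  (strictChamber p).indicator fun x => ENNReal.ofReal (eval x (singularWeight p q))

lemma measurable_singularDensity (q : ℕ) : Measurable (singularDensity p q) :=
  (measurable_ofReal_singularWeight p q).indicator isOpen_strictChamber.measurableSet

lemma withDensity_singularDensity (v : NNReal) (q : ℕ) :
    (Measure.pi fun _ => gaussianReal 0 v).withDensity (singularDensity p q) =
      singularMeasure v p q :=
  withDensity_indicator isOpen_strictChamber.measurableSet _

lemma map_conditionalSurvival_singularMeasure {v : NNReal} (hv : v ≠ 0) (q : ℕ) (k : Fin p) :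
    (singularMeasure v p q).map
        (conditionalSurvival (fun _ => gaussianReal 0 v) (singularDensity p q) k) =
      singularMeasure v p q Set.univ • volume.restrict (Set.Ioo 0 1) := by
  have := nullSingletonClass_gaussianReal (μ := 0) hv
  have hfinite : IsFiniteMeasure
      ((Measure.pi fun _ => gaussianReal 0 v).withDensity (singularDensity p q)) :=
    withDensity_singularDensity v q ▸ inferInstance
  rw [← withDensity_singularDensity,
    map_conditionalSurvival_eq_uniform _ k (measurable_singularDensity q)]

lemma exists_conditionalMeasure_real_eq {v : NNReal} (hv : v ≠ 0) (q : ℕ) (k : Fin p)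
    {x : Fin p → ℝ} (hx : x ∈ strictChamber p) :
    ∃ c > 0, ∀ s, MeasurableSet s →
      (conditionalMeasure (fun _ => gaussianReal 0 v) (singularDensity p q) k x).real s =
        c * ∫ z in s ∩ Function.update x k ⁻¹' strictChamber p, conditionalDensity v q k x z := by
  obtain ⟨c, hc₀, hc⟩ := exists_gaussianPDFReal_mul_eval_singularWeight_eq hv q k hx
  have hslice : MeasurableSet (Function.update x k ⁻¹' strictChamber p) :=
    measurable_update x isOpen_strictChamber.measurableSet
  have hdensity : (gaussianPDF 0 v * fun z => singularDensity p q (Function.update x k z)) =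
      (Function.update x k ⁻¹' strictChamber p).indicator fun z =>
        ENNReal.ofReal (c * conditionalDensity v q k x z) := by
    ext z
    by_cases hz : Function.update x k z ∈ strictChamber p
    · rw [Set.indicator_of_mem (Set.mem_preimage.2 hz), Pi.mul_apply, singularDensity,
        Set.indicator_of_mem hz, gaussianPDF, ← ENNReal.ofReal_mul (gaussianPDFReal_nonneg _ _ _),
        hc z hz]
    · rw [Set.indicator_of_notMem (mt Set.mem_preimage.1 hz), Pi.mul_apply, singularDensity,
        Set.indicator_of_notMem hz, mul_zero]
  have hmeas : Measurable fun z => singularDensity p q (Function.update x k z) :=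
    (measurable_singularDensity q).comp (measurable_update x)
  refine ⟨c, hc₀, fun s hs => ?_⟩
  have hsI : MeasurableSet (s ∩ Function.update x k ⁻¹' strictChamber p) := hs.inter hslice
  have hnonneg : 0 ≤ᵐ[volume.restrict (s ∩ Function.update x k ⁻¹' strictChamber p)]
      fun z => c * conditionalDensity v q k x z :=
    ae_restrict_of_forall_mem hsI fun z hz =>
      mul_nonneg hc₀.le (conditionalDensity_nonneg v q k x (by simpa using (hz.2.2 k).le))
  rw [conditionalMeasure, gaussianReal_of_var_ne_zero _ hv,
    ← withDensity_mul _ (measurable_gaussianPDF _ _) hmeas, hdensity, withDensity_indicator hslice,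
    measureReal_def, withDensity_apply _ hs, Measure.restrict_restrict hs, ← integral_const_mul,
    integral_eq_lintegral_of_nonneg_ae hnonneg
      ((measurable_conditionalDensity v q k x).const_mul c).aestronglyMeasurable]

lemma conditionalSurvival_singularDensity {v : NNReal} (hv : v ≠ 0) (q : ℕ) {k l : Fin p}
    (hkl : k ⋖ l) {x : Fin p → ℝ} (hx : x ∈ strictChamber p) :
    conditionalSurvival (fun _ => gaussianReal 0 v) (singularDensity p q) k x =
      (∫ z in {z | x k < z ∧ ∀ j < k, z < x j}, conditionalDensity v q k x z) /
        ∫ z in {z | x l < z ∧ ∀ j < k, z < x j}, conditionalDensity v q k x z := by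
  obtain ⟨c, hc₀, hc⟩ := exists_conditionalMeasure_real_eq hv q k hx
  have hslice : Function.update x k ⁻¹' strictChamber p = {z | x l < z ∧ ∀ j < k, z < x j} :=
    Set.ext (update_mem_strictChamber_iff hx hkl)
  have htail : Set.Ioi (x k) ∩ {z | x l < z ∧ ∀ j < k, z < x j} =
      {z | x k < z ∧ ∀ j < k, z < x j} := by
    ext z
    exact ⟨fun h => ⟨h.1, h.2.2⟩, fun h => ⟨h.1, (hx.1 hkl.lt).trans h.1, h.2⟩⟩
  rw [conditionalSurvival, hc _ measurableSet_Ioi, hc _ MeasurableSet.univ, Set.univ_inter, hslice,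
    htail, mul_div_mul_left _ _ hc₀.ne']

end ConditionalDensity

theorem csv_statistic_uniform_general {α : Type*} [Fintype α] {p q : ℕ}
    (hα : Fintype.card α = p + q) {v : NNReal} (hv : v ≠ 0) {B : Matrix α (Fin p) ℝ}
    {k l : Fin p} (hkl : k ⋖ l) {Ω : Type*} [MeasurableSpace Ω] {P : Measure Ω}
    [IsProbabilityMeasure P] {Y : Ω → α → Fin p → ℝ} {U : Ω → Matrix α (Fin p) ℝ}
    {d : Ω → Fin p → ℝ} {V : Ω → Matrix (Fin p) (Fin p) ℝ}
    (hY : P.map Y = Measure.pi fun i => Measure.pi fun j => gaussianReal (B i j) v)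
    (hd : AEMeasurable d P) (hsvd : ∀ᵐ ω ∂P, IsSVD (of (Y ω)) (U ω) (d ω) (V ω))
    (hnull : ∀ᵐ ω ∂P, U ω * diagonal (fun j => if k ≤ j then (1 : ℝ) else 0) * (U ω)ᵀ * B *
      (V ω * diagonal (fun j => if k ≤ j then (1 : ℝ) else 0) * (V ω)ᵀ) = 0) :
    P.map (fun ω =>
        (∫ z in {z | d ω k < z ∧ ∀ j < k, z < d ω j}, conditionalDensity v q k (d ω) z) /
          ∫ z in {z | d ω l < z ∧ ∀ j < k, z < d ω j}, conditionalDensity v q k (d ω) z) =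
      volume.restrict (Set.Ioo 0 1) := by
  obtain ⟨t, ht⟩ : ∃ t : Fin p, IsTop t := have : Nonempty (Fin p) := ⟨k⟩; Finite.exists_max id
  obtain rfl : B = 0 := by
    refine eq_zero_of_ae_exists_isSVD (by simp [hα]) ht hv hY ?_
    filter_upwards [hsvd, hnull] with ω hω hω₀
    exact ⟨U ω, d ω, V ω, hω, transpose_mul_mul_apply_eq_zero hω.left_orthonormal
      hω.right_orthonormal hω₀ (by simp [ht k])⟩
  have hlaw := map_singularValues_eq_singularMeasure hα hv hd hY
    (hsvd.mono fun ω hω => ⟨U ω, V ω, hω⟩)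
  have hchamber : ∀ᵐ ω ∂P, d ω ∈ strictChamber p := ae_of_ae_map hd <| hlaw ▸
    Measure.ae_smul_measure (ae_singularMeasure_mem_strictChamber v p q) _
  have hT := measurable_conditionalSurvival (fun _ => gaussianReal 0 v) k
    (measurable_singularDensity q)
  have hmass : singularMeasure v p q Set.univ ≠ 0 := fun h =>
    (singularMeasure_real_univ_pos p q hv).ne' (by simp [measureReal_def, h])
  rw [← Measure.map_congr (hchamber.mono fun ω hω =>
      conditionalSurvival_singularDensity hv q hkl hω),
    ← Function.comp_def, ← AEMeasurable.map_map_of_aemeasurable hT.aemeasurable hd, hlaw,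
    Measure.map_smul, map_conditionalSurvival_singularMeasure hv, smul_smul,
    ENNReal.inv_mul_cancel hmass (measure_ne_top _ _), one_smul]

/-- **Conditional Singular Value test (Theorem 2.1).**
Model: `Y = B + E ∈ ℝ^{N×p}` (here `N > p ≥ 1`) with i.i.d. `N(0, σ²)` noise entries, i.e.
the law of `Y` is the product Gaussian measure with mean matrix `B`.  `Y = U D Vᵀ` is a
measurably chosen singular value decomposition with singular values
`d 0 ≥ d 1 ≥ ⋯ ≥ d (p-1) ≥ 0`.  Fix a (zero-based) index `k` with `k + 1 < p`
(the `k+1`-st singular value, one-based `k+1 ∈ {1,…,p-1}`).  Under the null hypothesis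
`U^{-(k)} (U^{-(k)})ᵀ B V^{-(k)} (V^{-(k)})ᵀ = 0` (almost surely), where `U^{-(k)}` keeps the
columns of index `≥ k` (i.e. discards the first `k` columns, encoded below by the diagonal
mask `if k ≤ j then 1 else 0`), the statistic
`S = (∫_{d_k}^{d_{k-1}} e^{-z²/(2σ²)} z^{N-p} ∏_{j≠k} |z² - d_j²| dz) /
     (∫_{d_{k+1}}^{d_{k-1}} e^{-z²/(2σ²)} z^{N-p} ∏_{j≠k} |z² - d_j²| dz)`
is uniform on `(0,1)`.  The upper integration limit `d_{k-1}` (with convention `d_{-1} = ∞`)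
is encoded by the condition `∀ j < k, z < d j`. -/
theorem csv_statistic_uniform
    (N p : ℕ) (hNp : p < N) (hp : 1 ≤ p)
    (σ : ℝ) (hσ : 0 < σ)
    (B : Matrix (Fin N) (Fin p) ℝ)
    (k : ℕ) (hk : k + 1 < p)
    {Ω : Type} [MeasurableSpace Ω] (P : Measure Ω) [IsProbabilityMeasure P]
    (Y U : Ω → Fin N → Fin p → ℝ) (V : Ω → Fin p → Fin p → ℝ) (d : Ω → Fin p → ℝ)
    (hYm : Measurable Y) (hUm : Measurable U) (hVm : Measurable V) (hdm : Measurable d)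
    (hlaw : Measure.map Y P =
      Measure.pi (fun i : Fin N => Measure.pi (fun j : Fin p =>
        gaussianReal (B i j) ⟨σ ^ 2, sq_nonneg σ⟩)))
    (hSVD : ∀ ω, Matrix.of (Y ω) =
      Matrix.of (U ω) * Matrix.diagonal (d ω) * (Matrix.of (V ω))ᵀ)
    (hUorth : ∀ ω, (Matrix.of (U ω))ᵀ * Matrix.of (U ω) = 1)
    (hVorth : ∀ ω, (Matrix.of (V ω))ᵀ * Matrix.of (V ω) = 1)
    (hanti : ∀ ω, Antitone (d ω))
    (hnonneg : ∀ ω i, 0 ≤ d ω i)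
    (hnull : ∀ᵐ ω ∂P,
      (Matrix.of (U ω) * Matrix.diagonal (fun j : Fin p => if k ≤ (j : ℕ) then (1:ℝ) else 0) *
          (Matrix.of (U ω))ᵀ) * B *
        (Matrix.of (V ω) * Matrix.diagonal (fun j : Fin p => if k ≤ (j : ℕ) then (1:ℝ) else 0) *
          (Matrix.of (V ω))ᵀ) = 0) :
    Measure.map (fun ω =>
      (∫ z in {z : ℝ | d ω ⟨k, by omega⟩ < z ∧ ∀ j : Fin p, (j : ℕ) < k → z < d ω j},
        Real.exp (-(z ^ 2) / (2 * σ ^ 2)) * z ^ (N - p) *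
          ∏ j ∈ Finset.univ.erase (⟨k, by omega⟩ : Fin p), |z ^ 2 - d ω j ^ 2|) /
      (∫ z in {z : ℝ | d ω ⟨k + 1, by omega⟩ < z ∧ ∀ j : Fin p, (j : ℕ) < k → z < d ω j},
        Real.exp (-(z ^ 2) / (2 * σ ^ 2)) * z ^ (N - p) *
          ∏ j ∈ Finset.univ.erase (⟨k, by omega⟩ : Fin p), |z ^ 2 - d ω j ^ 2|)) P
      = volume.restrict (Set.Ioo (0 : ℝ) 1) := by
  exact csv_statistic_uniform_general (by rw [Fintype.card_fin, Nat.add_sub_cancel' hNp.le])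
    (v := ⟨σ ^ 2, sq_nonneg σ⟩) (fun h => (pow_pos hσ 2).ne' (congrArg NNReal.toReal h))
    (k := ⟨k, by omega⟩) (l := ⟨k + 1, hk⟩) (Fin.covBy_iff.2 (Nat.covBy_iff_add_one_eq.2 rfl))
    hlaw hdm.aemeasurable
    (ae_of_all P fun ω => ⟨hSVD ω, hUorth ω, hVorth ω, hanti ω, hnonneg ω⟩) hnull
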